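/- arXiv:1810.06039 — 2 statements merged into one kernel-verified Lean document; each statement's English description precedes it below -/
import Mathlib

section
/- Let p ≥ 2 and u be a weak solution of ∂_t(|u|^{p-2}u) − div A(x,t,u,Du) = div(|F|^{p-2}F) in Ω_T. Then on any cylinder Q_ρ^{(μ)}(z_o) ⊆ Ω_T with ρ, μ > 0 that is μ-sub-intrinsic with constant K, one has ⨍⨍_{Q_ρ^{(μ)}(z_o)} |u^⟨p/2⟩ − ((u)_{z_o;ρ}^{(μ)})^⟨p/2⟩|^2/ρ^p dx dt ≤ c [⨍⨍_{Q_ρ^{(μ)}(z_o)} |u − (u)_{z_o;ρ}^{(μ)}|^p/(μ^{2−p}ρ^p) dx dt]^{2/p} · [⨍⨍_{Q_ρ^{(μ)}(z_o)} (|Du|^p + |F|^p) dx dt]^{(p−2)/p}, where c = c(p,K). -/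
open MeasureTheory Set Filter
open scoped ENNReal Topology BigOperators

noncomputable section

abbrev Spc (n : ℕ) := EuclideanSpace ℝ (Fin n)
abbrev Vec (N : ℕ) := EuclideanSpace ℝ (Fin N)
abbrev Mat (N n : ℕ) := EuclideanSpace ℝ (Fin N × Fin n)

variable {n N : ℕ}

/-- Spatial partial derivative in direction `j` of a scalar function on space-time. -/
def pderivS (j : Fin n) (f : Spc n × ℝ → ℝ) (z : Spc n × ℝ) : ℝ :=
  fderiv ℝ (fun y => f (y, z.2)) z.1 (EuclideanSpace.single j 1)

/-- Time derivative of a vector-valued function on space-time. -/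
def tderiv (φ : Spc n × ℝ → Vec N) (z : Spc n × ℝ) : Vec N :=
  deriv (fun s => φ (z.1, s)) z.2

/-- Pairing `M · Dφ = ∑_{i,j} M_{ij} ∂_j φ_i` of a matrix field with the spatial gradient of a
test function. -/
def gradPair (M : Spc n × ℝ → Mat N n) (φ : Spc n × ℝ → Vec N) (z : Spc n × ℝ) : ℝ :=
  ∑ i : Fin N, ∑ j : Fin n, M z (i, j) * pderivS j (fun w => φ w i) z

/-- The power `w^⟨α⟩ := |w|^{α-1} w` of a vector. -/
def pw (α : ℝ) (w : Vec N) : Vec N := ‖w‖ ^ (α - 1) • w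

/-- Weak solution of the doubly nonlinear system
`∂_t(|u|^{p-2}u) − div A(x,t,u,Du) = div(|F|^{p-2}F)` in `Ω_T = Ω × (0,T)`. -/
structure WeakSolution (p ν L T : ℝ) (Ω : Set (Spc n))
    (A : Spc n × ℝ → Vec N → Mat N n → Mat N n)
    (F : Spc n × ℝ → Mat N n)
    (u : Spc n × ℝ → Vec N) (Du : Spc n × ℝ → Mat N n) : Prop where
  hn : 1 ≤ n
  hT : 0 < T
  openΩ : IsOpen Ω
  bddΩ : Bornology.IsBounded Ω
  connΩ : IsConnected Ω
  hν : 0 < ν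
  hνL : ν ≤ L
  measA : ∀ (v : Vec N) (ξ : Mat N n), Measurable fun z => A z v ξ
  contA : ∀ᵐ z ∂(volume.restrict (Ω ×ˢ Ioo 0 T)),
    Continuous fun q : Vec N × Mat N n => A z q.1 q.2
  coercivity : ∀ᵐ z ∂(volume.restrict (Ω ×ˢ Ioo 0 T)),
    ∀ (v : Vec N) (ξ : Mat N n), ν * ‖ξ‖ ^ p ≤ (inner ℝ (A z v ξ) ξ : ℝ)
  growth : ∀ᵐ z ∂(volume.restrict (Ω ×ˢ Ioo 0 T)),
    ∀ (v : Vec N) (ξ : Mat N n), ‖A z v ξ‖ ≤ L * ‖ξ‖ ^ (p - 1)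
  measu : Measurable u
  measDu : Measurable Du
  measF : Measurable F
  memLp_u : MemLp u (ENNReal.ofReal p) (volume.restrict (Ω ×ˢ Ioo 0 T))
  memLp_Du : MemLp Du (ENNReal.ofReal p) (volume.restrict (Ω ×ˢ Ioo 0 T))
  memLp_F : MemLp F (ENNReal.ofReal p) (volume.restrict (Ω ×ˢ Ioo 0 T))
  sliceLp : ∀ t ∈ Icc (0:ℝ) T,
    MemLp (fun x => u (x, t)) (ENNReal.ofReal p) (volume.restrict Ω)
  timeCont : ∀ t₀ ∈ Icc (0:ℝ) T,
    Tendsto (fun t => ∫ x in Ω, ‖u (x, t) - u (x, t₀)‖ ^ p) (𝓝[Icc (0:ℝ) T] t₀) (𝓝 0)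
  weakGrad : ∀ ψ : Spc n × ℝ → ℝ, ContDiff ℝ (⊤ : ℕ∞) ψ → HasCompactSupport ψ →
    tsupport ψ ⊆ Ω ×ˢ Ioo 0 T → ∀ (i : Fin N) (j : Fin n),
      ∫ z in Ω ×ˢ Ioo 0 T, u z i * pderivS j ψ z
        = - ∫ z in Ω ×ˢ Ioo 0 T, Du z (i, j) * ψ z
  weakForm : ∀ φ : Spc n × ℝ → Vec N, ContDiff ℝ (⊤ : ℕ∞) φ → HasCompactSupport φ →
    tsupport φ ⊆ Ω ×ˢ Ioo 0 T →
      ∫ z in Ω ×ˢ Ioo 0 T,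
        (‖u z‖ ^ (p - 2) * (inner ℝ (u z) (tderiv φ z) : ℝ)
          - gradPair (fun w => A w (u w) (Du w)) φ z)
        = ∫ z in Ω ×ˢ Ioo 0 T, ‖F z‖ ^ (p - 2) * gradPair F φ z

/-- The scaled parabolic cylinder `Q_ρ^{(μ)}(z₀)`:
`B_ρ(x₀) × (t₀ − μ^{p−2}ρ^p, t₀ + μ^{p−2}ρ^p)` if `p < 2`, and
`B_{μ^{(2−p)/p}ρ}(x₀) × (t₀ − ρ^p, t₀ + ρ^p)` if `p ≥ 2`. -/
def parCyl (p μ ρ : ℝ) (z₀ : Spc n × ℝ) : Set (Spc n × ℝ) :=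
  if p < 2 then
    Metric.ball z₀.1 ρ ×ˢ Ioo (z₀.2 - μ ^ (p - 2) * ρ ^ p) (z₀.2 + μ ^ (p - 2) * ρ ^ p)
  else
    Metric.ball z₀.1 (μ ^ ((2 - p) / p) * ρ) ×ˢ Ioo (z₀.2 - ρ ^ p) (z₀.2 + ρ ^ p)

/-- `Q_ρ^{(μ)}(z₀)` is `μ`-sub-intrinsic with constant `K`:
`⨍⨍ |u|^p/(μ^{2−𝔭}ρ^p) ≤ K μ^p ⨍⨍ (|Du|^p + |F|^p)`, where `𝔭 = max{p,2}`. -/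
def SubIntrinsic (p K μ ρ : ℝ) (z₀ : Spc n × ℝ) (u : Spc n × ℝ → Vec N)
    (Du F : Spc n × ℝ → Mat N n) : Prop :=
  ⨍ z in parCyl p μ ρ z₀, ‖u z‖ ^ p / (μ ^ (2 - max p 2) * ρ ^ p)
    ≤ K * μ ^ p * ⨍ z in parCyl p μ ρ z₀, (‖Du z‖ ^ p + ‖F z‖ ^ p)

/-- `Q_ρ^{(μ)}(z₀)` is `μ`-super-intrinsic with constant `K`:
either `μ^p ⨍⨍ (|Du|^p + |F|^p) ≤ K ⨍⨍ |u|^p/(μ^{2−𝔭}ρ^p)` or `μ^p ≤ K`. -/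
def SuperIntrinsic (p K μ ρ : ℝ) (z₀ : Spc n × ℝ) (u : Spc n × ℝ → Vec N)
    (Du F : Spc n × ℝ → Mat N n) : Prop :=
  (μ ^ p * ⨍ z in parCyl p μ ρ z₀, (‖Du z‖ ^ p + ‖F z‖ ^ p)
      ≤ K * ⨍ z in parCyl p μ ρ z₀, ‖u z‖ ^ p / (μ ^ (2 - max p 2) * ρ ^ p))
    ∨ μ ^ p ≤ K

/-!
The power map satisfies
`|a^⟨p/2⟩ − b^⟨p/2⟩|² ≤ (p/2)² (|a − b|^p)^{2/p} (|a|^p + |b|^p)^{(p−2)/p}`. Integrating this with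
`b` the mean value `m` of `u`, Hölder's inequality with `2/p + (p−2)/p = 1` yields the factors
`(⨍ |u − m|^p)^{2/p}` and `(⨍ |u|^p + |m|^p)^{(p−2)/p}`. By Jensen `|m|^p ≤ ⨍ |u|^p`, so the second
one is controlled by `⨍ |u|^p`, hence, on a sub-intrinsic cylinder, by the energy. The scales match
since `(μ^{2−p} ρ^p)^{2/p} (μ² ρ^p)^{(p−2)/p} = ρ^p`.
-/

section PowerMap

variable {α a b : ℝ}

-- The power lies above its tangent line at `a`; obtaining this from weighted AM-GM rather than from
-- the derivative includes the endpoints `a = 0` and `b = 0`.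
theorem mul_rpow_sub_one_mul_le_rpow_add (hα : 1 ≤ α) (ha : 0 ≤ a) (hb : 0 ≤ b) :
    α * (a ^ (α - 1) * b) ≤ b ^ α + (α - 1) * a ^ α := by
  have hα₀ : 0 < α := by linarith
  have amgm := Real.geom_mean_le_arith_mean2_weighted (inv_nonneg.2 hα₀.le)
    (div_nonneg (sub_nonneg.2 hα) hα₀.le) (Real.rpow_nonneg hb α) (Real.rpow_nonneg ha α)
    (by field_simp; ring)
  rw [← Real.rpow_mul hb, ← Real.rpow_mul ha, mul_inv_cancel₀ hα₀.ne', Real.rpow_one,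
    mul_div_cancel₀ _ hα₀.ne'] at amgm
  calc α * (a ^ (α - 1) * b) = α * (b * a ^ (α - 1)) := by ring
    _ ≤ α * (α⁻¹ * b ^ α + (α - 1) / α * a ^ α) := by gcongr
    _ = b ^ α + (α - 1) * a ^ α := by field_simp

theorem rpow_sub_one_sub_mul_le (hα : 1 ≤ α) (ha : 0 ≤ a) (hb : 0 ≤ b) :
    (a ^ (α - 1) - b ^ (α - 1)) * b ≤ (α - 1) * a ^ (α - 1) * (a - b) := by
  have rpow_eq {x : ℝ} (hx : 0 ≤ x) : x ^ α = x ^ (α - 1) * x := by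
    rw [← Real.rpow_add_one' hx (by linarith), sub_add_cancel]
  have tangent := mul_rpow_sub_one_mul_le_rpow_add hα ha hb
  rw [rpow_eq ha, rpow_eq hb] at tangent
  linarith

variable {E : Type*} [NormedAddCommGroup E] [NormedSpace ℝ E]

theorem norm_rpow_smul_sub_le_of_norm_le (hα : 1 ≤ α) {v w : E} (hwv : ‖w‖ ≤ ‖v‖) :
    ‖‖v‖ ^ (α - 1) • v - ‖w‖ ^ (α - 1) • w‖ ≤ α * ‖v‖ ^ (α - 1) * ‖v - w‖ := by
  have hα₀ : 0 ≤ α - 1 := by linarith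
  have hmono : ‖w‖ ^ (α - 1) ≤ ‖v‖ ^ (α - 1) := Real.rpow_le_rpow (norm_nonneg w) hwv hα₀
  have htri : ‖v‖ - ‖w‖ ≤ ‖v - w‖ := norm_sub_norm_le v w
  calc ‖‖v‖ ^ (α - 1) • v - ‖w‖ ^ (α - 1) • w‖
      = ‖‖v‖ ^ (α - 1) • (v - w) + (‖v‖ ^ (α - 1) - ‖w‖ ^ (α - 1)) • w‖ := by
        congr 1
        module
    _ ≤ ‖‖v‖ ^ (α - 1) • (v - w)‖ + ‖(‖v‖ ^ (α - 1) - ‖w‖ ^ (α - 1)) • w‖ := norm_add_le _ _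
    _ = ‖v‖ ^ (α - 1) * ‖v - w‖ + (‖v‖ ^ (α - 1) - ‖w‖ ^ (α - 1)) * ‖w‖ := by
        rw [norm_smul_of_nonneg (by positivity), norm_smul_of_nonneg (sub_nonneg.2 hmono)]
    _ ≤ ‖v‖ ^ (α - 1) * ‖v - w‖ + (α - 1) * ‖v‖ ^ (α - 1) * (‖v‖ - ‖w‖) :=
        add_le_add_right (rpow_sub_one_sub_mul_le hα (norm_nonneg v) (norm_nonneg w)) _
    _ ≤ ‖v‖ ^ (α - 1) * ‖v - w‖ + (α - 1) * ‖v‖ ^ (α - 1) * ‖v - w‖ := by gcongr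
    _ = α * ‖v‖ ^ (α - 1) * ‖v - w‖ := by ring

theorem norm_rpow_smul_sub_le (hα : 1 ≤ α) (v w : E) :
    ‖‖v‖ ^ (α - 1) • v - ‖w‖ ^ (α - 1) • w‖ ≤ α * max ‖v‖ ‖w‖ ^ (α - 1) * ‖v - w‖ := by
  rcases le_total ‖w‖ ‖v‖ with h | h
  · rw [max_eq_left h]
    exact norm_rpow_smul_sub_le_of_norm_le hα h
  · rw [max_eq_right h, norm_sub_rev, norm_sub_rev v]
    exact norm_rpow_smul_sub_le_of_norm_le hα h

theorem sq_norm_rpow_smul_sub_le {p : ℝ} (hp : 2 ≤ p) (v w : E) :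
    ‖‖v‖ ^ (p / 2 - 1) • v - ‖w‖ ^ (p / 2 - 1) • w‖ ^ 2
      ≤ (p / 2) ^ 2 * ((‖v - w‖ ^ p) ^ (2 / p) * (‖v‖ ^ p + ‖w‖ ^ p) ^ ((p - 2) / p)) := by
  have hp₀ : 0 < p := by linarith
  have hM : 0 ≤ max ‖v‖ ‖w‖ := by positivity
  have hsq : (max ‖v‖ ‖w‖ ^ (p / 2 - 1)) ^ 2 = (max ‖v‖ ‖w‖ ^ p) ^ ((p - 2) / p) := by
    rw [← Real.rpow_mul_natCast hM, ← Real.rpow_mul hM, mul_div_cancel₀ _ hp₀.ne']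
    congr 1
    push_cast
    ring
  have hdist : (‖v - w‖ ^ p) ^ (2 / p) = ‖v - w‖ ^ 2 := by
    rw [← Real.rpow_mul (norm_nonneg _), mul_div_cancel₀ _ hp₀.ne', Real.rpow_two]
  have hmax : max ‖v‖ ‖w‖ ^ p ≤ ‖v‖ ^ p + ‖w‖ ^ p := by
    rw [Real.rpow_max (norm_nonneg v) (norm_nonneg w) hp₀.le]
    exact max_le_add_of_nonneg (by positivity) (by positivity)
  calc ‖‖v‖ ^ (p / 2 - 1) • v - ‖w‖ ^ (p / 2 - 1) • w‖ ^ 2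
      ≤ (p / 2 * max ‖v‖ ‖w‖ ^ (p / 2 - 1) * ‖v - w‖) ^ 2 := by
        gcongr
        exact norm_rpow_smul_sub_le (by linarith) v w
    _ = (p / 2) ^ 2 * ((‖v - w‖ ^ p) ^ (2 / p) * (max ‖v‖ ‖w‖ ^ p) ^ ((p - 2) / p)) := by
        rw [hdist, ← hsq]
        ring
    _ ≤ (p / 2) ^ 2 * ((‖v - w‖ ^ p) ^ (2 / p) * (‖v‖ ^ p + ‖w‖ ^ p) ^ ((p - 2) / p)) := by
        gcongr

end PowerMap

section Hoelder

variable {X : Type*} [MeasurableSpace X] {P : Measure X} {f g : X → ℝ} {s t : ℝ}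

theorem integrable_rpow_mul_rpow (hf₀ : 0 ≤ f) (hg₀ : 0 ≤ g) (hf : Integrable f P)
    (hg : Integrable g P) (hs : 0 ≤ s) (ht : 0 ≤ t) (hst : s + t = 1) :
    Integrable (fun x => f x ^ s * g x ^ t) P := by
  refine ((hf.const_mul s).add (hg.const_mul t)).mono' ?_ (.of_forall fun x => ?_)
  · exact ((Real.continuous_rpow_const hs).comp_aestronglyMeasurable hf.1).mul
      ((Real.continuous_rpow_const ht).comp_aestronglyMeasurable hg.1)
  · rw [Real.norm_of_nonneg
      (mul_nonneg (Real.rpow_nonneg (hf₀ x) s) (Real.rpow_nonneg (hg₀ x) t))]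
    exact Real.geom_mean_le_arith_mean2_weighted hs ht (hf₀ x) (hg₀ x) hst

theorem integral_rpow_mul_rpow_le (hf₀ : 0 ≤ f) (hg₀ : 0 ≤ g) (hf : Integrable f P)
    (hg : Integrable g P) (hs : 0 ≤ s) (ht : 0 ≤ t) (hst : s + t = 1) :
    ∫ x, f x ^ s * g x ^ t ∂P ≤ (∫ x, f x ∂P) ^ s * (∫ x, g x ∂P) ^ t := by
  have hfs (x) : 0 ≤ f x ^ s := Real.rpow_nonneg (hf₀ x) s
  have hgt (x) : 0 ≤ g x ^ t := Real.rpow_nonneg (hg₀ x) t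
  have hIf : 0 ≤ ∫ x, f x ∂P := integral_nonneg hf₀
  have hIg : 0 ≤ ∫ x, g x ∂P := integral_nonneg hg₀
  rw [← ENNReal.ofReal_le_ofReal_iff (by positivity)]
  calc ENNReal.ofReal (∫ x, f x ^ s * g x ^ t ∂P)
      = ∫⁻ x, ENNReal.ofReal (f x ^ s * g x ^ t) ∂P :=
        ofReal_integral_eq_lintegral_ofReal (integrable_rpow_mul_rpow hf₀ hg₀ hf hg hs ht hst)
          (.of_forall fun x => mul_nonneg (hfs x) (hgt x))
    _ = ∫⁻ x, ENNReal.ofReal (f x) ^ s * ENNReal.ofReal (g x) ^ t ∂P := by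
        simp only [ENNReal.ofReal_mul (hfs _), ENNReal.ofReal_rpow_of_nonneg (hf₀ _) hs,
          ENNReal.ofReal_rpow_of_nonneg (hg₀ _) ht]
    _ ≤ (∫⁻ x, ENNReal.ofReal (f x) ∂P) ^ s * (∫⁻ x, ENNReal.ofReal (g x) ∂P) ^ t :=
        ENNReal.lintegral_mul_norm_pow_le hf.1.aemeasurable.ennreal_ofReal
          hg.1.aemeasurable.ennreal_ofReal hs ht hst
    _ = ENNReal.ofReal ((∫ x, f x ∂P) ^ s * (∫ x, g x ∂P) ^ t) := by
        rw [← ofReal_integral_eq_lintegral_ofReal hf (.of_forall hf₀),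
          ← ofReal_integral_eq_lintegral_ofReal hg (.of_forall hg₀),
          ENNReal.ofReal_rpow_of_nonneg hIf hs, ENNReal.ofReal_rpow_of_nonneg hIg ht,
          ← ENNReal.ofReal_mul (by positivity)]

end Hoelder

section Oscillation

variable {X E : Type*} [MeasurableSpace X] [NormedAddCommGroup E] {P : Measure X} {p : ℝ}
  {u : X → E}

theorem integrable_norm_rpow_of_memLp (hp : 0 < p) (hu : MemLp u (ENNReal.ofReal p) P) :
    Integrable (fun x => ‖u x‖ ^ p) P := by
  simpa only [ENNReal.toReal_ofReal hp.le] using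
    hu.integrable_norm_rpow (ENNReal.ofReal_pos.2 hp).ne' ENNReal.ofReal_ne_top

variable [NormedSpace ℝ E]

theorem norm_integral_rpow_le_integral_norm_rpow [IsProbabilityMeasure P] (hp : 1 ≤ p)
    (hu : MemLp u (ENNReal.ofReal p) P) : ‖∫ x, u x ∂P‖ ^ p ≤ ∫ x, ‖u x‖ ^ p ∂P := by
  have hp₀ : 0 < p := by linarith
  calc ‖∫ x, u x ∂P‖ ^ p ≤ (∫ x, ‖u x‖ ∂P) ^ p := by
        gcongr
        exact norm_integral_le_integral_norm u
    _ ≤ ∫ x, ‖u x‖ ^ p ∂P :=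
        (convexOn_rpow hp).map_integral_le (Real.continuous_rpow_const hp₀.le).continuousOn
          isClosed_Ici (.of_forall fun x => norm_nonneg (u x))
          (hu.integrable (ENNReal.one_le_ofReal.2 hp)).norm (integrable_norm_rpow_of_memLp hp₀ hu)

theorem integral_sq_norm_rpow_smul_sub_le [IsFiniteMeasure P] (hp : 2 ≤ p)
    (hu : MemLp u (ENNReal.ofReal p) P) (m : E) :
    ∫ x, ‖‖u x‖ ^ (p / 2 - 1) • u x - ‖m‖ ^ (p / 2 - 1) • m‖ ^ 2 ∂P
      ≤ (p / 2) ^ 2 * ((∫ x, ‖u x - m‖ ^ p ∂P) ^ (2 / p)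
          * (∫ x, (‖u x‖ ^ p + ‖m‖ ^ p) ∂P) ^ ((p - 2) / p)) := by
  have hp₀ : 0 < p := by linarith
  have hs : 0 ≤ 2 / p := by positivity
  have ht : 0 ≤ (p - 2) / p := div_nonneg (by linarith) hp₀.le
  have hst : 2 / p + (p - 2) / p = 1 := by field_simp; ring
  have hf₀ : 0 ≤ fun x => ‖u x - m‖ ^ p := fun x => by positivity
  have hg₀ : 0 ≤ fun x => ‖u x‖ ^ p + ‖m‖ ^ p := fun x => by positivity
  have hf := integrable_norm_rpow_of_memLp hp₀ (hu.sub (memLp_const m))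
  have hg := (integrable_norm_rpow_of_memLp hp₀ hu).add (integrable_const (‖m‖ ^ p))
  calc ∫ x, ‖‖u x‖ ^ (p / 2 - 1) • u x - ‖m‖ ^ (p / 2 - 1) • m‖ ^ 2 ∂P
      ≤ ∫ x, (p / 2) ^ 2 * ((‖u x - m‖ ^ p) ^ (2 / p)
          * (‖u x‖ ^ p + ‖m‖ ^ p) ^ ((p - 2) / p)) ∂P :=
        integral_mono_of_nonneg (.of_forall fun x => by positivity)
          ((integrable_rpow_mul_rpow hf₀ hg₀ hf hg hs ht hst).const_mul _)
          (.of_forall fun x => sq_norm_rpow_smul_sub_le hp (u x) m)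
    _ = (p / 2) ^ 2 * ∫ x, (‖u x - m‖ ^ p) ^ (2 / p)
          * (‖u x‖ ^ p + ‖m‖ ^ p) ^ ((p - 2) / p) ∂P := integral_const_mul _ _
    _ ≤ _ := by
        gcongr
        exact integral_rpow_mul_rpow_le hf₀ hg₀ hf hg hs ht hst

theorem integral_sq_norm_rpow_smul_sub_integral_le [IsProbabilityMeasure P] (hp : 2 ≤ p)
    (hu : MemLp u (ENNReal.ofReal p) P) :
    ∫ x, ‖‖u x‖ ^ (p / 2 - 1) • u x
        - ‖∫ y, u y ∂P‖ ^ (p / 2 - 1) • ∫ y, u y ∂P‖ ^ 2 ∂P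
      ≤ (p / 2) ^ 2 * ((∫ x, ‖u x - ∫ y, u y ∂P‖ ^ p ∂P) ^ (2 / p)
          * (2 * ∫ x, ‖u x‖ ^ p ∂P) ^ ((p - 2) / p)) := by
  have hp₀ : 0 < p := by linarith
  have hmean : ∫ x, (‖u x‖ ^ p + ‖∫ y, u y ∂P‖ ^ p) ∂P ≤ 2 * ∫ x, ‖u x‖ ^ p ∂P := by
    rw [integral_add (integrable_norm_rpow_of_memLp hp₀ hu) (integrable_const _), integral_const,
      probReal_univ, one_smul, two_mul]
    gcongr
    exact norm_integral_rpow_le_integral_norm_rpow (by linarith) hu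
  refine (integral_sq_norm_rpow_smul_sub_le hp hu _).trans ?_
  gcongr

theorem average_sq_norm_rpow_smul_sub_average_le [IsFiniteMeasure P] [NeZero P] (hp : 2 ≤ p)
    (hu : MemLp u (ENNReal.ofReal p) P) :
    ⨍ x, ‖‖u x‖ ^ (p / 2 - 1) • u x
        - ‖⨍ y, u y ∂P‖ ^ (p / 2 - 1) • ⨍ y, u y ∂P‖ ^ 2 ∂P
      ≤ (p / 2) ^ 2 * ((⨍ x, ‖u x - ⨍ y, u y ∂P‖ ^ p ∂P) ^ (2 / p)
          * (2 * ⨍ x, ‖u x‖ ^ p ∂P) ^ ((p - 2) / p)) :=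
  integral_sq_norm_rpow_smul_sub_integral_le hp
    (hu.smul_measure (ENNReal.inv_ne_top.2 (NeZero.ne (P univ))))

end Oscillation

theorem average_div {X : Type*} [MeasurableSpace X] {P : Measure X} (f : X → ℝ) (r : ℝ) :
    ⨍ x, f x / r ∂P = (⨍ x, f x ∂P) / r :=
  integral_div r f

theorem rpow_mul_rpow_scaling {p μ R : ℝ} (hp : 0 < p) (hμ : 0 < μ) (hR : 0 < R) :
    (μ ^ (2 - p) * R) ^ (2 / p) * (μ ^ (2 : ℝ) * R) ^ ((p - 2) / p) = R := by
  have hμ_exp : (2 - p) * (2 / p) + 2 * ((p - 2) / p) = 0 := by ring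
  have hR_exp : 2 / p + (p - 2) / p = 1 := by rw [← add_div, add_sub_cancel, div_self hp.ne']
  rw [Real.mul_rpow (by positivity) hR.le, Real.mul_rpow (by positivity) hR.le,
    ← Real.rpow_mul hμ.le, ← Real.rpow_mul hμ.le, mul_mul_mul_comm, ← Real.rpow_add hμ,
    ← Real.rpow_add hR, hμ_exp, hR_exp, Real.rpow_zero, Real.rpow_one, one_mul]

theorem rpow_mul_rpow_div_scaling {p μ R a C : ℝ} (hp : 0 < p) (hμ : 0 < μ) (hR : 0 < R)
    (ha : 0 ≤ a) (hC : 0 ≤ C) :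
    a ^ (2 / p) * (C * (μ ^ (2 : ℝ) * R)) ^ ((p - 2) / p) / R
      = (a / (μ ^ (2 - p) * R)) ^ (2 / p) * C ^ ((p - 2) / p) := by
  have hB : 0 < (μ ^ (2 : ℝ) * R) ^ ((p - 2) / p) := by positivity
  have hscale := rpow_mul_rpow_scaling hp hμ hR
  calc a ^ (2 / p) * (C * (μ ^ (2 : ℝ) * R)) ^ ((p - 2) / p) / R
      = a ^ (2 / p) * (C ^ ((p - 2) / p) * (μ ^ (2 : ℝ) * R) ^ ((p - 2) / p))
          / ((μ ^ (2 - p) * R) ^ (2 / p) * (μ ^ (2 : ℝ) * R) ^ ((p - 2) / p)) := by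
        rw [hscale, Real.mul_rpow hC (by positivity)]
    _ = (a / (μ ^ (2 - p) * R)) ^ (2 / p) * C ^ ((p - 2) / p) := by
        rw [← mul_assoc, mul_div_mul_right _ _ hB.ne', Real.div_rpow ha (by positivity),
          mul_div_right_comm]

instance isFiniteMeasure_restrict_parCyl (p μ ρ : ℝ) (z₀ : Spc n × ℝ) :
    IsFiniteMeasure (volume.restrict (parCyl p μ ρ z₀)) := by
  have hbdd : Bornology.IsBounded (parCyl p μ ρ z₀) := by
    unfold parCyl
    split_ifs <;> exact Metric.isBounded_ball.prod (Metric.isBounded_Ioo _ _)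
  exact isFiniteMeasure_restrict.2 hbdd.measure_lt_top.ne

theorem neZero_restrict_parCyl (p : ℝ) {μ ρ : ℝ} (hμ : 0 < μ) (hρ : 0 < ρ) (z₀ : Spc n × ℝ) :
    NeZero (volume.restrict (parCyl p μ ρ z₀)) := by
  have hopen : IsOpen (parCyl p μ ρ z₀) := by
    unfold parCyl
    split_ifs <;> exact Metric.isOpen_ball.prod isOpen_Ioo
  have hmem : z₀ ∈ parCyl p μ ρ z₀ := by
    unfold parCyl
    split_ifs
    all_goals
      refine ⟨Metric.mem_ball_self (by positivity), ?_, ?_⟩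
      · exact sub_lt_self _ (by positivity)
      · exact lt_add_of_pos_right _ (by positivity)
  exact ⟨Measure.restrict_eq_zero.not.2 (hopen.measure_pos volume ⟨z₀, hmem⟩).ne'⟩

theorem superquadratic_comparison_general {X E : Type*} [MeasurableSpace X]
    [NormedAddCommGroup E] [NormedSpace ℝ E] {P : Measure X} [IsFiniteMeasure P] [NeZero P]
    {u : X → E} {p K μ ρ M : ℝ} (hp : 2 ≤ p) (hK : 0 ≤ K) (hρ : 0 < ρ) (hμ : 0 < μ) (hM : 0 ≤ M)
    (hu : MemLp u (ENNReal.ofReal p) P)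
    (hsub : ⨍ x, ‖u x‖ ^ p / (μ ^ (2 - p) * ρ ^ p) ∂P ≤ K * μ ^ p * M) :
    ⨍ x, ‖‖u x‖ ^ (p / 2 - 1) • u x
        - ‖⨍ y, u y ∂P‖ ^ (p / 2 - 1) • ⨍ y, u y ∂P‖ ^ 2 / ρ ^ p ∂P
      ≤ (p / 2) ^ 2 * (2 * K) ^ ((p - 2) / p)
          * (⨍ x, ‖u x - ⨍ y, u y ∂P‖ ^ p / (μ ^ (2 - p) * ρ ^ p) ∂P) ^ (2 / p)
          * M ^ ((p - 2) / p) := by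
  have hp₀ : 0 < p := by linarith
  have hosc := average_sq_norm_rpow_smul_sub_average_le hp hu
  simp only [average_div] at hsub ⊢
  set m := ⨍ x, u x ∂P
  set a := ⨍ x, ‖u x - m‖ ^ p ∂P
  set b := ⨍ x, ‖u x‖ ^ p ∂P
  have ha : 0 ≤ a := integral_nonneg fun x => by positivity
  have hb : 0 ≤ b := integral_nonneg fun x => by positivity
  have hb_le : 2 * b ≤ 2 * K * M * (μ ^ (2 : ℝ) * ρ ^ p) := by
    rw [div_le_iff₀ (by positivity)] at hsub
    calc 2 * b ≤ 2 * (K * μ ^ p * M * (μ ^ (2 - p) * ρ ^ p)) := by gcongr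
      _ = 2 * K * M * (μ ^ (p + (2 - p)) * ρ ^ p) := by rw [Real.rpow_add hμ]; ring
      _ = 2 * K * M * (μ ^ (2 : ℝ) * ρ ^ p) := by rw [add_sub_cancel]
  calc (⨍ x, ‖‖u x‖ ^ (p / 2 - 1) • u x - ‖m‖ ^ (p / 2 - 1) • m‖ ^ 2 ∂P) / ρ ^ p
      ≤ (p / 2) ^ 2 * (a ^ (2 / p) * (2 * b) ^ ((p - 2) / p)) / ρ ^ p := by gcongr
    _ ≤ (p / 2) ^ 2 * (a ^ (2 / p) * (2 * K * M * (μ ^ (2 : ℝ) * ρ ^ p)) ^ ((p - 2) / p)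
          / ρ ^ p) := by
        rw [mul_div_assoc]
        gcongr
    _ = (p / 2) ^ 2 * ((a / (μ ^ (2 - p) * ρ ^ p)) ^ (2 / p) * (2 * K * M) ^ ((p - 2) / p)) := by
        rw [rpow_mul_rpow_div_scaling hp₀ hμ (by positivity) ha (by positivity)]
    _ = (p / 2) ^ 2 * (2 * K) ^ ((p - 2) / p) * (a / (μ ^ (2 - p) * ρ ^ p)) ^ (2 / p)
          * M ^ ((p - 2) / p) := by
        rw [Real.mul_rpow (by positivity) hM]
        ring

/-- Let `p ≥ 2` and `u` a weak solution. On any `μ`-sub-intrinsic cylinder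
`Q_ρ^{(μ)}(z₀) ⊆ Ω_T` one has
`⨍⨍ |u^⟨p/2⟩ − ((u))^⟨p/2⟩|²/ρ^p ≤ c (⨍⨍ |u − (u)|^p/(μ^{2−p}ρ^p))^{2/p}
(⨍⨍ (|Du|^p + |F|^p))^{(p−2)/p}` with `c = c(p, K)`. -/
theorem superquadratic_comparison (p K : ℝ) (hp : 2 ≤ p) (hK : 1 ≤ K) :
    ∃ c > 0, ∀ (n N : ℕ) (ν L T : ℝ) (Ω : Set (Spc n))
      (A : Spc n × ℝ → Vec N → Mat N n → Mat N n) (F : Spc n × ℝ → Mat N n)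
      (u : Spc n × ℝ → Vec N) (Du : Spc n × ℝ → Mat N n),
      WeakSolution p ν L T Ω A F u Du →
      ∀ (z₀ : Spc n × ℝ) (ρ μ : ℝ), 0 < ρ → 0 < μ →
        parCyl p μ ρ z₀ ⊆ Ω ×ˢ Ioo 0 T →
        SubIntrinsic p K μ ρ z₀ u Du F →
        ⨍ z in parCyl p μ ρ z₀,
            ‖pw (p / 2) (u z) - pw (p / 2) (⨍ w in parCyl p μ ρ z₀, u w)‖ ^ 2 / ρ ^ p
          ≤ c * (⨍ z in parCyl p μ ρ z₀,
                  ‖u z - ⨍ w in parCyl p μ ρ z₀, u w‖ ^ p / (μ ^ (2 - p) * ρ ^ p)) ^ (2 / p)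
              * (⨍ z in parCyl p μ ρ z₀, (‖Du z‖ ^ p + ‖F z‖ ^ p)) ^ ((p - 2) / p) :=
  ⟨(p / 2) ^ 2 * (2 * K) ^ ((p - 2) / p), by positivity,
    fun _ _ _ _ _ _ _ _ _ _ hsol z₀ _ _ hρ hμ hQ hsub =>
    have := neZero_restrict_parCyl p hμ hρ z₀
    superquadratic_comparison_general hp (by linarith) hρ hμ
      (integral_nonneg fun _ => by positivity)
      (hsol.memLp_u.mono_measure (Measure.restrict_mono_set volume hQ))
      (by simpa only [SubIntrinsic, max_eq_left hp] using hsub)⟩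
end
end

section
/- Parabolic Poincaré inequality, superquadratic case: Let p ≥ 2 and u be a weak solution of ∂_t(|u|^{p-2}u) − div A(x,t,u,Du) = div(|F|^{p-2}F) in Ω_T. Then on any cylinder Q_ρ^{(μ)}(z_o) ⊆ Ω_T with ρ, μ > 0 that is both μ-sub-intrinsic and μ-super-intrinsic with constant K, for any q ∈ [p−1,p] one has ⨍⨍_{Q_ρ^{(μ)}(z_o)} |u − (u)_{z_o;ρ}^{(μ)}|^q/(μ^{q(2−p)/p}ρ^q) dx dt ≤ c ⨍⨍_{Q_ρ^{(μ)}(z_o)} (|Du|^q + |F|^q) dx dt, where c = c(n,p,L,K). -/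
open MeasureTheory Set Filter
open scoped ENNReal Topology BigOperators

noncomputable section

variable {n N : ℕ}

/-!
Put `s = p - 1`. Tested with functions that separate the variables, the system says that for a
spatial cutoff `η` the slice integrals `∫ η |u|^{s-1} u dx` solve a weak ordinary differential
equation whose right side is the flux paired with `∇η`; hence they oscillate in time by at most a
multiple of the mean of `(|Du| + |F|)^s`. Undoing the power gives slice means `a(t)`. As the power
map is quasi-monotone, `a(t)` is almost the best constant approximating `u(·, t)`, so `u - a` is
controlled by the spatial Poincaré inequality, which follows from the fundamental theorem of
calculus along translations.

It remains to pass from the oscillation of `|a|^{s-1} a` to that of `a`, which loses a power where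
`a` is small. The super-intrinsic coupling repairs the loss: unless `μ` is bounded, it forces
`|a|` to be, at some time, at least a multiple of `μ R` times the `Lᵖ` mean of `|Du| + |F|`, where
`R` is the radius of the spatial ball; around such a value the power map is nondegenerate at
precisely the required scale.
-/

theorem add_rpow_le_two_rpow_mul {a b s : ℝ} (ha : 0 ≤ a) (hb : 0 ≤ b) (hs : 0 ≤ s) :
    (a + b) ^ s ≤ 2 ^ s * (a ^ s + b ^ s) := by
  have hmax : 0 ≤ max a b := ha.trans (le_max_left a b)
  calc (a + b) ^ s ≤ (2 * max a b) ^ s := by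
        gcongr
        linarith [le_max_left a b, le_max_right a b]
    _ = 2 ^ s * max a b ^ s := Real.mul_rpow (by norm_num) hmax
    _ ≤ 2 ^ s * (a ^ s + b ^ s) := by
      gcongr
      rcases max_choice a b with h | h <;> rw [h] <;>
        linarith [Real.rpow_nonneg ha s, Real.rpow_nonneg hb s]

theorem rpow_sub_rpow_le {x y α : ℝ} (hx : 0 ≤ x) (hxy : x ≤ y) (hα : 1 ≤ α) :
    y ^ α - x ^ α ≤ α * y ^ (α - 1) * (y - x) := by
  rcases hxy.eq_or_lt with rfl | hlt
  · simp
  have hslope := (convexOn_rpow hα).slope_le_of_hasDerivAt hx (hx.trans hlt.le) hlt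
    (Real.hasDerivAt_rpow_const (Or.inr hα))
  rwa [slope_def_field, div_le_iff₀ (sub_pos.2 hlt)] at hslope

theorem abs_rpow_sub_rpow_mul_le {a b α : ℝ} (ha : 0 ≤ a) (hb : 0 ≤ b) (hα : 1 ≤ α) :
    |a ^ (α - 1) - b ^ (α - 1)| * b ≤ α * max a b ^ (α - 1) * |a - b| := by
  have hsplit : ∀ x : ℝ, 0 ≤ x → x ^ (α - 1) * x = x ^ α := fun x hx => by
    rw [← Real.rpow_add_one' hx (by linarith), sub_add_cancel]
  rcases le_total a b with h | h
  · have hmono : a ^ (α - 1) ≤ b ^ (α - 1) := Real.rpow_le_rpow ha h (by linarith)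
    rw [max_eq_right h, abs_of_nonpos (by linarith), abs_of_nonpos (by linarith)]
    nlinarith [rpow_sub_rpow_le ha h hα, hsplit a ha, hsplit b hb,
      mul_le_mul_of_nonneg_left h (Real.rpow_nonneg ha (α - 1))]
  · have hmono : b ^ (α - 1) ≤ a ^ (α - 1) := Real.rpow_le_rpow hb h (by linarith)
    rw [max_eq_left h, abs_of_nonneg (by linarith), abs_of_nonneg (by linarith)]
    nlinarith [rpow_sub_rpow_le hb h hα, hsplit a ha, hsplit b hb,
      mul_le_mul_of_nonneg_left h (Real.rpow_nonneg ha (α - 1))]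

theorem le_mul_of_rpow_add_le {X Y m s C : ℝ} (hY : 0 ≤ Y) (hm : 0 ≤ m) (hs : 1 ≤ s)
    (hC : 1 ≤ C) (h : X ^ s + m * X ≤ C * (Y ^ s + m * Y)) : X ≤ C * Y := by
  by_contra! hlt
  have hpow : (C * Y) ^ s < X ^ s := Real.rpow_lt_rpow (by positivity) hlt (by linarith)
  have hCs : C * Y ^ s ≤ C ^ s * Y ^ s := by
    gcongr
    exact Real.self_le_rpow_of_one_le hC hs
  have hlin : m * (C * Y) ≤ m * X := by gcongr
  rw [Real.mul_rpow (by linarith) hY] at hpow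
  linarith

section PowMap

variable {V : Type*} [NormedAddCommGroup V]

/-- The power `v^⟨α⟩ = |v|^{α-1} v` of a vector, the operation `pw` in an arbitrary normed
space; for `α = p - 1` it is the nonlinearity under the time derivative. -/
def powMap [NormedSpace ℝ V] (α : ℝ) (v : V) : V := ‖v‖ ^ (α - 1) • v

theorem norm_powMap [NormedSpace ℝ V] {α : ℝ} (hα : α ≠ 0) (v : V) :
    ‖powMap α v‖ = ‖v‖ ^ α := by
  rw [powMap, norm_smul, Real.norm_of_nonneg (by positivity),
    ← Real.rpow_add_one' (norm_nonneg v) (by simpa using hα), sub_add_cancel]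

theorem powMap_powMap_inv [NormedSpace ℝ V] {α : ℝ} (hα : α ≠ 0) (v : V) :
    powMap α (powMap α⁻¹ v) = v := by
  rcases eq_or_ne v 0 with rfl | hv
  · simp [powMap]
  have hpos : 0 < ‖v‖ := norm_pos_iff.2 hv
  rw [powMap, norm_powMap (inv_ne_zero hα), powMap, smul_smul, ← Real.rpow_mul hpos.le,
    ← Real.rpow_add hpos, mul_sub, inv_mul_cancel₀ hα]
  simp

theorem aestronglyMeasurable_powMap [NormedSpace ℝ V] {X : Type*} [MeasurableSpace X]
    {P : Measure X} {f : X → V} (hf : AEStronglyMeasurable f P) (α : ℝ) :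
    AEStronglyMeasurable (fun x => powMap α (f x)) P :=
  (hf.norm.aemeasurable.pow_const _).aestronglyMeasurable.smul hf

variable [InnerProductSpace ℝ V]

theorem rpow_add_rpow_mul_norm_sub_le (a b : V) {α : ℝ} (hα : 1 ≤ α) :
    (‖a‖ ^ (α - 1) + ‖b‖ ^ (α - 1)) * ‖a - b‖ ≤ 2 * ‖powMap α a - powMap α b‖ := by
  rcases eq_or_ne a b with rfl | hab
  · simp
  have hcauchy : inner ℝ (powMap α a - powMap α b) (a - b)
      ≤ ‖powMap α a - powMap α b‖ * ‖a - b‖ := real_inner_le_norm _ _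
  have hexpand : 2 * inner ℝ (powMap α a - powMap α b) (a - b)
      = (‖a‖ ^ (α - 1) + ‖b‖ ^ (α - 1)) * ‖a - b‖ ^ 2
        + (‖a‖ ^ (α - 1) - ‖b‖ ^ (α - 1)) * (‖a‖ ^ 2 - ‖b‖ ^ 2) := by
    rw [@norm_sub_sq_real]
    simp only [powMap, inner_sub_left, inner_sub_right, real_inner_smul_left,
      real_inner_self_eq_norm_sq, real_inner_comm a b]
    ring
  have hmono : 0 ≤ (‖a‖ ^ (α - 1) - ‖b‖ ^ (α - 1)) * (‖a‖ ^ 2 - ‖b‖ ^ 2) := by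
    rcases le_total ‖a‖ ‖b‖ with h | h
    · exact mul_nonneg_of_nonpos_of_nonpos
        (sub_nonpos.2 (Real.rpow_le_rpow (norm_nonneg _) h (by linarith)))
        (sub_nonpos.2 (by gcongr))
    · exact mul_nonneg (sub_nonneg.2 (Real.rpow_le_rpow (norm_nonneg _) h (by linarith)))
        (sub_nonneg.2 (by gcongr))
  refine le_of_mul_le_mul_right ?_ (norm_pos_iff.2 (sub_ne_zero.2 hab))
  linarith

theorem norm_sub_rpow_add_le (a b : V) {α : ℝ} (hα : 1 ≤ α) :
    ‖a - b‖ ^ α + ‖b‖ ^ (α - 1) * ‖a - b‖ ≤ (2 ^ α + 2) * ‖powMap α a - powMap α b‖ := by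
  have hmono := rpow_add_rpow_mul_norm_sub_le a b hα
  have hnorm : ‖a - b‖ ^ (α - 1) ≤ 2 ^ (α - 1) * (‖a‖ ^ (α - 1) + ‖b‖ ^ (α - 1)) :=
    (Real.rpow_le_rpow (norm_nonneg _) (norm_sub_le a b) (by linarith)).trans
      (add_rpow_le_two_rpow_mul (norm_nonneg a) (norm_nonneg b) (by linarith))
  have hpow : ‖a - b‖ ^ α ≤ 2 ^ α * ‖powMap α a - powMap α b‖ := by
    calc ‖a - b‖ ^ α = ‖a - b‖ ^ (α - 1) * ‖a - b‖ := by
          rw [← Real.rpow_add_one' (norm_nonneg _) (by linarith), sub_add_cancel]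
      _ ≤ 2 ^ (α - 1) * (‖a‖ ^ (α - 1) + ‖b‖ ^ (α - 1)) * ‖a - b‖ := by gcongr
      _ ≤ 2 ^ (α - 1) * (2 * ‖powMap α a - powMap α b‖) := by rw [mul_assoc]; gcongr
      _ = 2 ^ α * ‖powMap α a - powMap α b‖ := by
          rw [← mul_assoc, ← Real.rpow_add_one (by norm_num), sub_add_cancel]
  have hfst : 0 ≤ ‖a‖ ^ (α - 1) * ‖a - b‖ := by positivity
  linarith

theorem norm_powMap_sub_powMap_le (a b : V) {α : ℝ} (hα : 1 ≤ α) :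
    ‖powMap α a - powMap α b‖
      ≤ (α + 1) * 2 ^ α * (‖a - b‖ ^ α + ‖b‖ ^ (α - 1) * ‖a - b‖) := by
  set m := max ‖a‖ ‖b‖
  have hdecomp : powMap α a - powMap α b
      = ‖a‖ ^ (α - 1) • (a - b) + (‖a‖ ^ (α - 1) - ‖b‖ ^ (α - 1)) • b := by
    simp only [powMap]
    module
  have hscalar : |‖a‖ ^ (α - 1) - ‖b‖ ^ (α - 1)| * ‖b‖ ≤ α * m ^ (α - 1) * ‖a - b‖ :=
    (abs_rpow_sub_rpow_mul_le (norm_nonneg a) (norm_nonneg b) hα).trans (by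
      gcongr
      exact abs_norm_sub_norm_le a b)
  have hfst : ‖a‖ ^ (α - 1) ≤ m ^ (α - 1) :=
    Real.rpow_le_rpow (norm_nonneg _) (le_max_left _ _) (by linarith)
  have hm : m ^ (α - 1) ≤ 2 ^ α * (‖a - b‖ ^ (α - 1) + ‖b‖ ^ (α - 1)) := by
    have hle : m ≤ ‖a - b‖ + ‖b‖ :=
      max_le (norm_le_norm_sub_add a b) (by linarith [norm_nonneg (a - b)])
    refine (Real.rpow_le_rpow (by positivity) hle (by linarith)).trans
      ((add_rpow_le_two_rpow_mul (norm_nonneg _) (norm_nonneg _) (by linarith)).trans ?_)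
    gcongr
    · norm_num
    · linarith
  calc ‖powMap α a - powMap α b‖
      ≤ ‖a‖ ^ (α - 1) * ‖a - b‖ + |‖a‖ ^ (α - 1) - ‖b‖ ^ (α - 1)| * ‖b‖ := by
        rw [hdecomp]
        refine (norm_add_le _ _).trans_eq ?_
        rw [norm_smul, norm_smul, Real.norm_of_nonneg (by positivity), Real.norm_eq_abs]
    _ ≤ m ^ (α - 1) * ‖a - b‖ + α * m ^ (α - 1) * ‖a - b‖ := by gcongr
    _ = (α + 1) * (m ^ (α - 1) * ‖a - b‖) := by ring
    _ ≤ (α + 1) * (2 ^ α * (‖a - b‖ ^ (α - 1) + ‖b‖ ^ (α - 1)) * ‖a - b‖) := by gcongr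
    _ = (α + 1) * 2 ^ α * (‖a - b‖ ^ (α - 1) * ‖a - b‖ + ‖b‖ ^ (α - 1) * ‖a - b‖) := by ring
    _ = _ := by rw [← Real.rpow_add_one' (norm_nonneg _) (by linarith), sub_add_cancel]

end PowMap

theorem integral_fderiv_sub_smul {E : Type*} [NormedAddCommGroup E] [NormedSpace ℝ E]
    {ψ : E → ℝ} (hψ : ContDiff ℝ 1 ψ) (x v : E) :
    ∫ s in Ioc (0 : ℝ) 1, fderiv ℝ ψ (x - s • v) v = ψ x - ψ (x - v) := by
  have hline : ∀ s : ℝ, HasDerivAt (fun s : ℝ => ψ (x - s • v)) (-(fderiv ℝ ψ (x - s • v) v)) s :=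
    fun s => by
      have hs : HasDerivAt (fun s : ℝ => x - s • v) (-v) s := by
        simpa using ((hasDerivAt_id s).smul_const v).const_sub x
      rw [← map_neg]
      exact (hψ.differentiable one_ne_zero _).hasFDerivAt.comp_hasDerivAt s hs
  have hcont : Continuous fun s : ℝ => -(fderiv ℝ ψ (x - s • v) v) :=
    (((hψ.continuous_fderiv one_ne_zero).comp (by fun_prop)).clm_apply continuous_const).neg
  have hftc := intervalIntegral.integral_eq_sub_of_hasDerivAt (fun s _ => hline s)
    (hcont.intervalIntegrable 0 1)
  rw [intervalIntegral.integral_of_le zero_le_one, integral_neg, one_smul, zero_smul,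
    sub_zero] at hftc
  linarith

theorem integrable_translate_prod {E W : Type*} [NormedAddCommGroup E] [NormedSpace ℝ E]
    [FiniteDimensional ℝ E] [MeasurableSpace E] [BorelSpace E] [NormedAddCommGroup W]
    {m : Measure E} [m.IsAddHaarMeasure] {f : E → W} (hm : StronglyMeasurable f)
    (hf : Integrable f m) (v : E) :
    Integrable (fun y : E × ℝ => f (y.1 + y.2 • v))
      (m.prod (volume.restrict (Ioc (0 : ℝ) 1))) := by
  have hmeas : StronglyMeasurable fun y : E × ℝ => f (y.1 + y.2 • v) :=
    hm.comp_measurable (by fun_prop)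
  rw [integrable_prod_iff' hmeas.aestronglyMeasurable]
  refine ⟨Eventually.of_forall fun s => hf.comp_add_right (s • v), ?_⟩
  simp_rw [integral_add_right_eq_self (fun x => ‖f x‖)]
  exact integrable_const _

theorem rpow_lintegral_le_lintegral_rpow {X : Type*} [MeasurableSpace X] (P : Measure X)
    [IsProbabilityMeasure P] {f : X → ℝ≥0∞} (hf : AEMeasurable f P) {q : ℝ} (hq : 1 ≤ q) :
    (∫⁻ x, f x ∂P) ^ q ≤ ∫⁻ x, f x ^ q ∂P := by
  have h := ENNReal.rpow_le_rpow
    (eLpNorm'_le_eLpNorm'_of_exponent_le one_pos hq P hf.aestronglyMeasurable) (by linarith : 0 ≤ q)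
  simpa [eLpNorm', ← ENNReal.rpow_mul, inv_mul_cancel₀ (by linarith : q ≠ 0)] using h

theorem integrable_smul_of_support_subset {X W : Type*} [TopologicalSpace X] [MeasurableSpace X]
    [OpensMeasurableSpace X] [NormedAddCommGroup W] [NormedSpace ℝ W] {m : Measure X} {U : Set X}
    {θ : X → ℝ} {f : X → W} (hf : IntegrableOn f U m)
    (hθ : Continuous θ) (hθc : HasCompactSupport θ) (hθU : Function.support θ ⊆ U) :
    Integrable (fun x => θ x • f x) m := by
  obtain ⟨C, hC⟩ := hθc.exists_bound_of_continuous hθ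
  refine (integrableOn_iff_integrable_of_support_subset
    ((Function.support_smul_subset_left θ f).trans hθU)).1 ?_
  exact hf.bdd_smul C hθ.aestronglyMeasurable (Eventually.of_forall hC)

section WeakLineDeriv

variable {E W : Type*} [NormedAddCommGroup E] [NormedSpace ℝ E] [MeasurableSpace E]
  [NormedAddCommGroup W] [NormedSpace ℝ W] {m : Measure E} {U : Set E} {v : E} {f f' : E → W}

/-- `f'` is the weak derivative of `f` in the direction `v` on the open set `U`. The integrals run
over the whole space, but only see `f` and `f'` on `U`, where the test functions live. -/
def HasWeakLineDeriv (m : Measure E) (U : Set E) (v : E) (f f' : E → W) : Prop :=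
  ∀ ψ : E → ℝ, ContDiff ℝ (⊤ : ℕ∞) ψ → HasCompactSupport ψ → tsupport ψ ⊆ U →
    ∫ x, fderiv ℝ ψ x v • f x ∂m = -∫ x, ψ x • f' x ∂m

theorem HasWeakLineDeriv.mono {U' : Set E} (h : HasWeakLineDeriv m U v f f') (hU : U' ⊆ U) :
    HasWeakLineDeriv m U' v f f' :=
  fun ψ hψ hψc hψU => h ψ hψ hψc (hψU.trans hU)

theorem HasWeakLineDeriv.const_smul (h : HasWeakLineDeriv m U v f f') (c : ℝ) :
    HasWeakLineDeriv m U (c • v) f (fun x => c • f' x) := fun ψ hψ hψc hψU => by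
  simp_rw [map_smul, smul_assoc, smul_comm _ c, integral_smul, h ψ hψ hψc hψU, smul_neg]

theorem HasWeakLineDeriv.congr_ae {g g' : E → W} (h : HasWeakLineDeriv m U v f f')
    (hf : f =ᵐ[m] g) (hf' : f' =ᵐ[m] g') : HasWeakLineDeriv m U v g g' :=
  fun ψ hψ hψc hψU => by
    have hl : ∫ x, fderiv ℝ ψ x v • f x ∂m = ∫ x, fderiv ℝ ψ x v • g x ∂m :=
      integral_congr_ae (hf.mono fun x hx => by simp only [hx])
    have hr : ∫ x, ψ x • f' x ∂m = ∫ x, ψ x • g' x ∂m :=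
      integral_congr_ae (hf'.mono fun x hx => by simp only [hx])
    rw [← hl, ← hr]
    exact h ψ hψ hψc hψU

theorem HasWeakLineDeriv.indicator (h : HasWeakLineDeriv m U v f f') :
    HasWeakLineDeriv m U v (U.indicator f) (U.indicator f') := fun ψ hψ hψc hψU => by
  have hout : ∀ x ∉ U, ψ x = 0 ∧ fderiv ℝ ψ x = 0 := fun x hx =>
    ⟨image_eq_zero_of_notMem_tsupport fun hs => hx (hψU hs),
      image_eq_zero_of_notMem_tsupport fun hs => hx (hψU (tsupport_fderiv_subset ℝ (f := ψ) hs))⟩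
  have hl : ∀ x, fderiv ℝ ψ x v • U.indicator f x = fderiv ℝ ψ x v • f x := fun x => by
    by_cases hx : x ∈ U <;> simp [hx, hout]
  have hr : ∀ x, ψ x • U.indicator f' x = ψ x • f' x := fun x => by
    by_cases hx : x ∈ U <;> simp [hx, hout]
  simpa only [hl, hr] using h ψ hψ hψc hψU

variable [BorelSpace E]

theorem integrable_fderiv_smul {ψ : E → ℝ} (hψ : ContDiff ℝ (⊤ : ℕ∞) ψ)
    (hψc : HasCompactSupport ψ) (hψU : tsupport ψ ⊆ U) {f : E → W} (hf : IntegrableOn f U m)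
    (v : E) : Integrable (fun x => fderiv ℝ ψ x v • f x) m :=
  integrable_smul_of_support_subset hf
    ((hψ.continuous_fderiv (by simp)).clm_apply continuous_const) (hψc.fderiv_apply (𝕜 := ℝ) v)
    (((subset_tsupport _).trans (tsupport_fderiv_apply_subset ℝ v)).trans hψU)

theorem HasWeakLineDeriv.sum {ι : Type*} {s : Finset ι} {v : ι → E} {f : E → W}
    {f' : ι → E → W} (hf : IntegrableOn f U m) (hf' : ∀ i ∈ s, IntegrableOn (f' i) U m)
    (h : ∀ i ∈ s, HasWeakLineDeriv m U (v i) f (f' i)) :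
    HasWeakLineDeriv m U (∑ i ∈ s, v i) f (fun x => ∑ i ∈ s, f' i x) := fun ψ hψ hψc hψU => by
  simp_rw [map_sum, Finset.sum_smul, Finset.smul_sum]
  rw [integral_finsetSum _ fun i _ => integrable_fderiv_smul hψ hψc hψU hf (v i),
    integral_finsetSum _ fun i hi => integrable_smul_of_support_subset (hf' i hi) hψ.continuous
      hψc ((subset_tsupport ψ).trans hψU), ← Finset.sum_neg_distrib]
  exact Finset.sum_congr rfl fun i hi => h i hi ψ hψ hψc hψU

theorem hasWeakLineDeriv_of_apply {ι : Type*} [Fintype ι] {f f' : E → EuclideanSpace ℝ ι}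
    (hf : IntegrableOn f U m) (hf' : IntegrableOn f' U m)
    (h : ∀ i, HasWeakLineDeriv m U v (fun x => f x i) fun x => f' x i) :
    HasWeakLineDeriv m U v f f' := fun ψ hψ hψc hψU => by
  have happly : ∀ {g : E → EuclideanSpace ℝ ι}, Integrable g m → ∀ i,
      (∫ x, g x ∂m) i = ∫ x, g x i ∂m := fun hg i =>
    ((EuclideanSpace.proj (𝕜 := ℝ) i).integral_comp_comm hg).symm
  ext i
  rw [PiLp.neg_apply, happly (integrable_fderiv_smul hψ hψc hψU hf v),
    happly (integrable_smul_of_support_subset hf' hψ.continuous hψc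
      ((subset_tsupport ψ).trans hψU))]
  exact h i ψ hψ hψc hψU

variable [m.IsAddHaarMeasure]

theorem HasWeakLineDeriv.integral_smul_translate (h : HasWeakLineDeriv m U v f f')
    (hUc : Convex ℝ U) {ψ : E → ℝ} (hψ : ContDiff ℝ (⊤ : ℕ∞) ψ) (hψc : HasCompactSupport ψ)
    (hψU : tsupport ψ ⊆ U ∩ (· + v) ⁻¹' U) {s : ℝ} (hs : s ∈ Icc (0 : ℝ) 1) :
    ∫ x, ψ x • f' (x + s • v) ∂m = -∫ x, fderiv ℝ ψ (x - s • v) v • f x ∂m := by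
  have hsupp : tsupport (fun x => ψ (x - s • v)) ⊆ U := by
    rw [show tsupport (fun x => ψ (x - s • v)) = (fun x => x - s • v) ⁻¹' tsupport ψ from
      tsupport_comp_eq_preimage ψ (Homeomorph.subRight (s • v))]
    intro x hx
    simpa using hUc.add_smul_mem (hψU hx).1 (hψU hx).2 hs
  have hweak := h (fun x => ψ (x - s • v)) (hψ.comp (contDiff_id.sub contDiff_const))
    (hψc.comp_homeomorph (Homeomorph.subRight (s • v))) hsupp
  simp_rw [fderiv_comp_sub] at hweak
  rw [hweak, neg_neg, ← integral_add_right_eq_self (fun x => ψ (x - s • v) • f' x) (s • v)]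
  simp

variable [FiniteDimensional ℝ E] [CompleteSpace W]

theorem HasWeakLineDeriv.integral_smul_integral_translate (h : HasWeakLineDeriv m U v f f')
    (hUc : Convex ℝ U) (hf : Integrable f m) (hm' : StronglyMeasurable f')
    (hf' : Integrable f' m) {ψ : E → ℝ} (hψ : ContDiff ℝ (⊤ : ℕ∞) ψ)
    (hψc : HasCompactSupport ψ) (hψU : tsupport ψ ⊆ U ∩ (· + v) ⁻¹' U) :
    ∫ x, ψ x • (∫ s in Ioc (0 : ℝ) 1, f' (x + s • v)) ∂m = ∫ x, (ψ (x - v) - ψ x) • f x ∂m := by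
  have hψ₁ : ContDiff ℝ 1 ψ := hψ.of_le (by exact_mod_cast le_top)
  have hdv : Continuous fun x => fderiv ℝ ψ x v :=
    (hψ₁.continuous_fderiv one_ne_zero).clm_apply continuous_const
  obtain ⟨Cψ, hCψ⟩ := hψc.exists_bound_of_continuous hψ.continuous
  obtain ⟨Cd, hCd⟩ := (hψc.fderiv_apply (𝕜 := ℝ) v).exists_bound_of_continuous hdv
  have hint_left : Integrable (fun y : E × ℝ => ψ y.1 • f' (y.1 + y.2 • v))
      (m.prod (volume.restrict (Ioc (0 : ℝ) 1))) :=
    (integrable_translate_prod hm' hf' v).bdd_smul Cψ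
      (hψ.continuous.comp continuous_fst).aestronglyMeasurable
      (Eventually.of_forall fun y => hCψ y.1)
  have hint_right : Integrable (fun y : E × ℝ => fderiv ℝ ψ (y.1 - y.2 • v) v • f y.1)
      (m.prod (volume.restrict (Ioc (0 : ℝ) 1))) :=
    (hf.comp_fst _).bdd_smul Cd
      (hdv.comp (by fun_prop : Continuous fun y : E × ℝ => y.1 - y.2 • v)).aestronglyMeasurable
      (Eventually.of_forall fun y => hCd _)
  calc ∫ x, ψ x • (∫ s in Ioc (0 : ℝ) 1, f' (x + s • v)) ∂m
      = ∫ s in Ioc (0 : ℝ) 1, ∫ x, ψ x • f' (x + s • v) ∂m := by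
        simp_rw [← integral_smul]
        exact integral_integral_swap hint_left
    _ = ∫ s in Ioc (0 : ℝ) 1, -∫ x, fderiv ℝ ψ (x - s • v) v • f x ∂m :=
        setIntegral_congr_fun measurableSet_Ioc fun s hs =>
          h.integral_smul_translate hUc hψ hψc hψU ⟨hs.1.le, hs.2⟩
    _ = ∫ x, -(∫ s in Ioc (0 : ℝ) 1, fderiv ℝ ψ (x - s • v) v • f x) ∂m := by
        rw [integral_neg, integral_neg]
        exact congrArg _ (integral_integral_swap hint_right).symm
    _ = ∫ x, (ψ (x - v) - ψ x) • f x ∂m := by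
        simp_rw [integral_smul_const, integral_fderiv_sub_smul hψ₁, ← neg_smul, neg_sub]

theorem HasWeakLineDeriv.ae_sub_eq_integral (h : HasWeakLineDeriv m U v f f') (hU : IsOpen U)
    (hUc : Convex ℝ U) (hf : Integrable f m) (hm' : StronglyMeasurable f')
    (hf' : Integrable f' m) : ∀ᵐ x ∂m, x ∈ U → x + v ∈ U →
      f (x + v) - f x = ∫ s in Ioc (0 : ℝ) 1, f' (x + s • v) := by
  have hO : IsOpen (U ∩ (· + v) ⁻¹' U) := hU.inter (hU.preimage (by fun_prop))
  have hfv : Integrable (fun x => f (x + v)) m := hf.comp_add_right v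
  have hP : Integrable (fun x => ∫ s in Ioc (0 : ℝ) 1, f' (x + s • v)) m :=
    (integrable_translate_prod hm' hf' v).integral_prod_left
  have hzero := hO.ae_eq_zero_of_integral_contDiff_smul_eq_zero (μ := m)
    (f := fun x => f (x + v) - f x - ∫ s in Ioc (0 : ℝ) 1, f' (x + s • v))
    (((hfv.sub hf).sub hP).locallyIntegrable.locallyIntegrableOn _) ?_
  · filter_upwards [hzero] with x hx hxU hxv
    exact sub_eq_zero.1 (hx ⟨hxU, hxv⟩)
  intro ψ hψ hψc hψO
  obtain ⟨C, hC⟩ := hψc.exists_bound_of_continuous hψ.continuous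
  have hsmul : ∀ {g : E → W}, Integrable g m → Integrable (fun x => ψ x • g x) m := fun hg =>
    hg.bdd_smul C hψ.continuous.aestronglyMeasurable (Eventually.of_forall hC)
  have hshift : ∫ x, ψ x • f (x + v) ∂m = ∫ x, ψ (x - v) • f x ∂m := by
    rw [← integral_add_right_eq_self (fun x => ψ (x - v) • f x) v]
    simp
  have hshift_int : Integrable (fun x => ψ (x - v) • f x) m := by
    simpa using (hsmul hfv).comp_sub_right v
  simp_rw [smul_sub]
  rw [integral_sub (by exact (hsmul hfv).sub (hsmul hf)) (hsmul hP),
    integral_sub (hsmul hfv) (hsmul hf),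
    h.integral_smul_integral_translate hUc hf hm' hf' hψ hψc hψO, hshift]
  simp_rw [sub_smul]
  rw [integral_sub hshift_int (hsmul hf), sub_self]

theorem setLIntegral_segment_le (hU : MeasurableSet U) (hUc : Convex ℝ U) {g : E → ℝ≥0∞}
    (hg : Measurable g) :
    ∫⁻ x in U ∩ (· + v) ⁻¹' U, (∫⁻ s in Ioc (0 : ℝ) 1, g (x + s • v)) ∂m ≤ ∫⁻ x in U, g x ∂m := by
  have hmeas : Measurable fun y : E × ℝ => g (y.1 + y.2 • v) := hg.comp (by fun_prop)
  calc ∫⁻ x in U ∩ (· + v) ⁻¹' U, (∫⁻ s in Ioc (0 : ℝ) 1, g (x + s • v)) ∂m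
      = ∫⁻ s in Ioc (0 : ℝ) 1, (∫⁻ x in U ∩ (· + v) ⁻¹' U, g (x + s • v) ∂m) :=
        lintegral_lintegral_swap hmeas.aemeasurable
    _ ≤ ∫⁻ _ in Ioc (0 : ℝ) 1, (∫⁻ x in U, g x ∂m) := by
        refine setLIntegral_mono' measurableSet_Ioc fun s hs => ?_
        rw [← lintegral_indicator (hU.inter (hU.preimage (by fun_prop))),
          ← lintegral_indicator hU, ← lintegral_add_right_eq_self (U.indicator g) (s • v)]
        refine lintegral_mono fun x =>
          indicator_le (g := fun x => U.indicator g (x + s • v)) (fun y hy => ?_) x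
        rw [indicator_of_mem (hUc.add_smul_mem hy.1 hy.2 ⟨hs.1.le, hs.2⟩)]
    _ = ∫⁻ x in U, g x ∂m := by simp

theorem HasWeakLineDeriv.lintegral_translate_sub_rpow_le (h : HasWeakLineDeriv m U v f f')
    (hU : IsOpen U) (hUc : Convex ℝ U) (hf : IntegrableOn f U m) (hf' : IntegrableOn f' U m)
    {r : ℝ} (hr : 1 ≤ r) :
    ∫⁻ x in U ∩ (· + v) ⁻¹' U, ‖f (x + v) - f x‖ₑ ^ r ∂m ≤ ∫⁻ x in U, ‖f' x‖ₑ ^ r ∂m := by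
  have hUm := hU.measurableSet
  have hi := hf.integrable_indicator hUm
  have hi' := hf'.integrable_indicator hUm
  set g := hi'.1.mk
  have hg : StronglyMeasurable g := hi'.1.stronglyMeasurable_mk
  have hfg : U.indicator f' =ᵐ[m] g := hi'.1.ae_eq_mk
  have hftc := (h.indicator.congr_ae ae_eq_rfl hfg).ae_sub_eq_integral hU hUc hi hg
    (hi'.congr hfg)
  have : IsProbabilityMeasure (volume.restrict (Ioc (0 : ℝ) 1)) := ⟨by simp⟩
  calc ∫⁻ x in U ∩ (· + v) ⁻¹' U, ‖f (x + v) - f x‖ₑ ^ r ∂m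
      ≤ ∫⁻ x in U ∩ (· + v) ⁻¹' U, (∫⁻ s in Ioc (0 : ℝ) 1, ‖g (x + s • v)‖ₑ ^ r) ∂m := by
        refine setLIntegral_mono_ae' (hUm.inter (hUm.preimage (by fun_prop))) ?_
        filter_upwards [hftc] with x hx hxU
        have hx := hx hxU.1 hxU.2
        rw [indicator_of_mem hxU.1, indicator_of_mem (show x + v ∈ U from hxU.2)] at hx
        rw [hx]
        exact (ENNReal.rpow_le_rpow (enorm_integral_le_lintegral_enorm _) (by linarith)).trans
          (rpow_lintegral_le_lintegral_rpow _
            (hg.enorm.comp (by fun_prop : Measurable fun s : ℝ => x + s • v)).aemeasurable hr)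
    _ ≤ ∫⁻ x in U, ‖g x‖ₑ ^ r ∂m := setLIntegral_segment_le hUm hUc (hg.enorm.pow_const r)
    _ = ∫⁻ x in U, ‖f' x‖ₑ ^ r ∂m := by
        refine setLIntegral_congr_fun_ae hUm ?_
        filter_upwards [hfg] with x hx hxU
        rw [← hx, indicator_of_mem hxU]

end WeakLineDeriv

theorem norm_integral_segment_le {V : Type*} [NormedAddCommGroup V] [NormedSpace ℝ V]
    {k : ℝ → V} (hk : Integrable k) (x v : ℝ) :
    ‖∫ s in Ioc (0 : ℝ) 1, v • k (x + s * v)‖ ≤ ∫ t, ‖k t‖ := by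
  rcases eq_or_ne v 0 with rfl | hv
  · simpa using integral_nonneg fun t => norm_nonneg (k t)
  have hint : Integrable fun s => ‖v • k (x + s * v)‖ :=
    (((hk.comp_add_left x).comp_mul_right' hv).smul v).norm
  calc ‖∫ s in Ioc (0 : ℝ) 1, v • k (x + s * v)‖
      ≤ ∫ s in Ioc (0 : ℝ) 1, ‖v • k (x + s * v)‖ := norm_integral_le_integral_norm _
    _ ≤ ∫ s, ‖v • k (x + s * v)‖ :=
        setIntegral_le_integral hint (Eventually.of_forall fun s => norm_nonneg _)
    _ = |v| * ∫ s, ‖k (x + s * v)‖ := by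
        simp only [norm_smul, Real.norm_eq_abs, integral_const_mul]
    _ = ∫ t, ‖k t‖ := by
        rw [Measure.integral_comp_mul_right (fun y => ‖k (x + y)‖) v,
          integral_add_left_eq_self (fun y => ‖k y‖) x, smul_eq_mul, abs_inv,
          mul_inv_cancel_left₀ (abs_ne_zero.2 hv)]

theorem ae_ae_of_forall_ae_add {E : Type*} [AddCommGroup E] [MeasurableSpace E]
    [MeasurableAdd₂ E] {m : Measure E} [SFinite m] [m.IsAddLeftInvariant] {S : Set (E × E)}
    (hS : MeasurableSet S) (h : ∀ v, ∀ᵐ x ∂m, (x, x + v) ∈ S) : ∀ᵐ x ∂m, ∀ᵐ y ∂m, (x, y) ∈ S := by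
  have hmeas : MeasurableSet {w : E × E | (w.2, w.2 + w.1) ∈ S} :=
    hS.preimage (measurable_snd.prodMk (measurable_snd.add measurable_fst))
  filter_upwards [(Measure.ae_ae_comm (μ := m) (ν := m) hmeas).1 (Eventually.of_forall h)]
    with x hx
  filter_upwards [(measurePreserving_add_left m (-x)).quasiMeasurePreserving.ae hx] with y hy
  simpa using hy

theorem HasWeakLineDeriv.ae_norm_add_sub_le {V : Type*} [NormedAddCommGroup V] [NormedSpace ℝ V]
    [CompleteSpace V] {I : Set ℝ} {g l : ℝ → V} (h : HasWeakLineDeriv volume I 1 g l)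
    (hI : IsOpen I) (hIc : Convex ℝ I) (hg : Integrable g) (hlm : StronglyMeasurable l)
    (hl : Integrable l) (v : ℝ) :
    ∀ᵐ x, x ∈ I → x + v ∈ I → ‖g (x + v) - g x‖ ≤ ∫ t, ‖l t‖ := by
  have hderiv : HasWeakLineDeriv volume I v g (fun t => v • l t) := by
    simpa using h.const_smul v
  filter_upwards [hderiv.ae_sub_eq_integral hI hIc hg (hlm.const_smul v) (hl.smul v)]
    with x hx hxI hxv
  rw [hx hxI hxv]
  exact norm_integral_segment_le hl x v

theorem HasWeakLineDeriv.ae_ae_norm_sub_le {V : Type*} [NormedAddCommGroup V] [NormedSpace ℝ V]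
    [CompleteSpace V] {I : Set ℝ} {f k : ℝ → V} (h : HasWeakLineDeriv volume I 1 f k)
    (hI : IsOpen I) (hIc : Convex ℝ I) (hf : IntegrableOn f I) (hk : IntegrableOn k I) :
    ∀ᵐ t' ∂(volume.restrict I), ∀ᵐ t ∂(volume.restrict I), ‖f t - f t'‖ ≤ ∫ t in I, ‖k t‖ := by
  have hIm := hI.measurableSet
  have hfi := hf.integrable_indicator hIm
  have hki := hk.integrable_indicator hIm
  set g := hfi.1.mk
  set l := hki.1.mk
  have hfg : I.indicator f =ᵐ[volume] g := hfi.1.ae_eq_mk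
  have hkl : I.indicator k =ᵐ[volume] l := hki.1.ae_eq_mk
  have hl : ∫ t, ‖l t‖ = ∫ t in I, ‖k t‖ := by
    have : ∫ t, ‖I.indicator k t‖ = ∫ t, ‖l t‖ :=
      integral_congr_ae (hkl.mono fun t ht => by simp only [ht])
    rw [← this, ← integral_indicator hIm]
    simp only [norm_indicator_eq_indicator_norm]
  have hshift := (h.indicator.congr_ae hfg hkl).ae_norm_add_sub_le hI hIc (hfi.congr hfg)
    hki.1.stronglyMeasurable_mk (hki.congr hkl)
  have hg : Measurable fun w : ℝ × ℝ => ‖g w.2 - g w.1‖ :=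
    ((hfi.1.stronglyMeasurable_mk.comp_measurable measurable_snd).sub
      (hfi.1.stronglyMeasurable_mk.comp_measurable measurable_fst)).norm.measurable
  have hpairs := ae_ae_of_forall_ae_add (m := (volume : Measure ℝ))
    (S := {w | w.1 ∈ I → w.2 ∈ I → ‖g w.2 - g w.1‖ ≤ ∫ t, ‖l t‖})
    ((hIm.preimage measurable_fst).imp ((hIm.preimage measurable_snd).imp
      (measurableSet_le hg measurable_const))) hshift
  have hgI : ∀ᵐ t ∂(volume.restrict I), f t = g t := by
    rw [ae_restrict_iff' hIm]
    filter_upwards [hfg] with t ht htI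
    rw [← ht, indicator_of_mem htI]
  filter_upwards [ae_restrict_of_ae hpairs, ae_restrict_mem hIm, hgI] with t' ht' htI' he'
  filter_upwards [ae_restrict_of_ae ht', ae_restrict_mem hIm, hgI] with t ht htI he
  rw [he, he', ← hl]
  exact ht htI' htI

open scoped ProbabilityTheory

section LpNorm

variable {X V : Type*} [MeasurableSpace X] [NormedAddCommGroup V] {P : Measure X} {f : X → V}

theorem eLpNorm_ofReal_rpow {r : ℝ} (hr : 0 < r) :
    eLpNorm f (ENNReal.ofReal r) P ^ r = ∫⁻ x, ‖f x‖ₑ ^ r ∂P := by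
  rw [eLpNorm_eq_lintegral_rpow_enorm_toReal (by simpa using hr) ENNReal.ofReal_ne_top,
    ENNReal.toReal_ofReal hr.le, ← ENNReal.rpow_mul, one_div_mul_cancel hr.ne', ENNReal.rpow_one]

theorem integral_norm_rpow_eq_lpNorm_rpow {r : ℝ} (hr : 0 < r) (hf : AEStronglyMeasurable f P) :
    ∫ x, ‖f x‖ ^ r ∂P = lpNorm f (ENNReal.ofReal r) P ^ r := by
  rw [lpNorm_eq_integral_norm_rpow_toReal (by simpa using hr) ENNReal.ofReal_ne_top hf,
    ENNReal.toReal_ofReal hr.le, ← Real.rpow_mul (integral_nonneg fun x => by positivity),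
    inv_mul_cancel₀ hr.ne', Real.rpow_one]

variable {r s : ℝ}

theorem memLp_ofReal_of_le [IsFiniteMeasure P] (hsr : s ≤ r) (hf : MemLp f (ENNReal.ofReal r) P) :
    MemLp f (ENNReal.ofReal s) P :=
  hf.mono_exponent (ENNReal.ofReal_le_ofReal hsr)

theorem lpNorm_ofReal_le_of_le [IsProbabilityMeasure P] (hsr : s ≤ r)
    (hf : MemLp f (ENNReal.ofReal r) P) :
    lpNorm f (ENNReal.ofReal s) P ≤ lpNorm f (ENNReal.ofReal r) P := by
  rw [← toReal_eLpNorm hf.1, ← toReal_eLpNorm hf.1]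
  exact ENNReal.toReal_mono hf.2.ne
    (eLpNorm_le_eLpNorm_of_exponent_le (ENNReal.ofReal_le_ofReal hsr) hf.1)

theorem integrable_norm_rpow [IsFiniteMeasure P] (hs : 0 < s) (hsr : s ≤ r)
    (hf : MemLp f (ENNReal.ofReal r) P) :
    Integrable (fun x => ‖f x‖ ^ s) P := by
  simpa [ENNReal.toReal_ofReal hs.le] using
    (memLp_ofReal_of_le hsr hf).integrable_norm_rpow (by simpa using hs) ENNReal.ofReal_ne_top

theorem integral_norm_rpow_le_lpNorm_rpow [IsProbabilityMeasure P] (hs : 0 < s) (hsr : s ≤ r)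
    (hf : MemLp f (ENNReal.ofReal r) P) :
    ∫ x, ‖f x‖ ^ s ∂P ≤ lpNorm f (ENNReal.ofReal r) P ^ s := by
  rw [integral_norm_rpow_eq_lpNorm_rpow hs hf.1]
  exact Real.rpow_le_rpow lpNorm_nonneg (lpNorm_ofReal_le_of_le hsr hf) hs.le

theorem lpNorm_norm_add_norm_rpow_le [IsFiniteMeasure P] {W : Type*} [NormedAddCommGroup W]
    {g : X → W} (hr : 0 < r) (hf : MemLp f (ENNReal.ofReal r) P)
    (hg : MemLp g (ENNReal.ofReal r) P) :
    lpNorm (fun z => ‖f z‖ + ‖g z‖) (ENNReal.ofReal r) P ^ r ≤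
      2 ^ r * ∫ z, (‖f z‖ ^ r + ‖g z‖ ^ r) ∂P := by
  have hfg : MemLp (fun z => ‖f z‖ + ‖g z‖) (ENNReal.ofReal r) P := hf.norm.add hg.norm
  have hint : Integrable (fun z => ‖f z‖ ^ r + ‖g z‖ ^ r) P :=
    (integrable_norm_rpow hr le_rfl hf).add (integrable_norm_rpow hr le_rfl hg)
  rw [← integral_norm_rpow_eq_lpNorm_rpow hr hfg.1, ← integral_const_mul]
  refine integral_mono (integrable_norm_rpow hr le_rfl hfg) (hint.const_mul _) fun z => ?_
  simp only [Real.norm_of_nonneg (add_nonneg (norm_nonneg (f z)) (norm_nonneg (g z)))]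
  exact add_rpow_le_two_rpow_mul (norm_nonneg _) (norm_nonneg _) hr.le

theorem integral_norm_rpow_le_of_lpNorm_le [IsFiniteMeasure P] {U W : Type*} [NormedAddCommGroup U]
    [NormedAddCommGroup W] {g : X → W} {w : X → U} {a : ℝ} (hr : 0 < r) (ha : 0 ≤ a)
    (hw : AEStronglyMeasurable w P) (hf : MemLp f (ENNReal.ofReal r) P)
    (hg : MemLp g (ENNReal.ofReal r) P)
    (hle : lpNorm w (ENNReal.ofReal r) P ≤
      a * lpNorm (fun z => ‖f z‖ + ‖g z‖) (ENNReal.ofReal r) P) :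
    ∫ z, ‖w z‖ ^ r ∂P ≤ (a * 2) ^ r * ∫ z, (‖f z‖ ^ r + ‖g z‖ ^ r) ∂P := by
  rw [integral_norm_rpow_eq_lpNorm_rpow hr hw, Real.mul_rpow ha zero_le_two, mul_assoc]
  calc _ ≤ (a * lpNorm (fun z => ‖f z‖ + ‖g z‖) (ENNReal.ofReal r) P) ^ r :=
        Real.rpow_le_rpow lpNorm_nonneg hle hr.le
    _ = a ^ r * lpNorm (fun z => ‖f z‖ + ‖g z‖) (ENNReal.ofReal r) P ^ r :=
        Real.mul_rpow ha lpNorm_nonneg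
    _ ≤ _ := by
        gcongr
        exact lpNorm_norm_add_norm_rpow_le hr hf hg

end LpNorm

section CondProd

variable {X Y : Type*} [MeasurableSpace X] [MeasurableSpace Y] (m : Measure X) (k : Measure Y)
  [SFinite m] [SFinite k] {B : Set X} (I : Set Y)

theorem cond_prod_cond (hB₀ : m B ≠ 0) (hB : m B ≠ ∞) :
    m[|B].prod k[|I] = (m.prod k)[|B ×ˢ I] := by
  simp only [ProbabilityTheory.cond]
  rw [Measure.prod_smul_left, Measure.prod_smul_right, smul_smul, Measure.prod_restrict,
    Measure.prod_prod, ENNReal.mul_inv (.inl hB₀) (.inl hB)]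

theorem cond_prod_restrict (B : Set X) :
    m[|B].prod (k.restrict I) = (m B)⁻¹ • (m.prod k).restrict (B ×ˢ I) := by
  rw [ProbabilityTheory.cond, Measure.prod_smul_left, Measure.prod_restrict]

theorem integrable_cond_prod_restrict {V : Type*} [NormedAddCommGroup V] {f : X × Y → V}
    (hB : m B ≠ 0) (hf : IntegrableOn f (B ×ˢ I) (m.prod k)) :
    Integrable f (m[|B].prod (k.restrict I)) :=
  cond_prod_restrict m k I B ▸ hf.smul_measure (ENNReal.inv_ne_top.2 hB)

theorem integral_cond_prod_restrict {V : Type*} [NormedAddCommGroup V] [NormedSpace ℝ V]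
    (f : X × Y → V) (hB₀ : m B ≠ 0) (hB : m B ≠ ∞) (hI₀ : k I ≠ 0) (hI : k I ≠ ∞) :
    ∫ z, f z ∂(m[|B].prod (k.restrict I)) = k.real I • ∫ z, f z ∂(m.prod k)[|B ×ˢ I] := by
  rw [← cond_prod_cond m k I hB₀ hB, ProbabilityTheory.cond, ProbabilityTheory.cond,
    Measure.prod_smul_right, integral_smul_measure, ENNReal.toReal_inv, ← measureReal_def,
    smul_inv_smul₀ (measureReal_ne_zero_iff hI |>.2 hI₀)]

theorem quasiMeasurePreserving_snd_cond (B : Set X) :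
    Measure.QuasiMeasurePreserving Prod.snd (m.prod k)[|B ×ˢ I] (k.restrict I) :=
  (Measure.quasiMeasurePreserving_snd (μ := m.restrict B)).mono_left <| by
    rw [ProbabilityTheory.cond, Measure.prod_restrict]
    exact Measure.smul_absolutelyContinuous

end CondProd

theorem ball_prod_inter_preimage_add_eq_empty {X Y : Type*} [SeminormedAddCommGroup X]
    [AddZeroClass Y] {x₀ h : X} {R : ℝ} (hh : h ∉ Metric.ball (0 : X) (2 * R)) (I : Set Y) :
    Metric.ball x₀ R ×ˢ I ∩ (· + (h, 0)) ⁻¹' Metric.ball x₀ R ×ˢ I = ∅ := by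
  refine eq_empty_of_forall_notMem fun z hz => hh (mem_ball_zero_iff.2 ?_)
  have hx := mem_ball_iff_norm.1 hz.1.1
  have hxh := mem_ball_iff_norm.1 hz.2.1
  calc ‖h‖ = ‖((z + (h, 0)).1 - x₀) - (z.1 - x₀)‖ := by simp
    _ ≤ ‖(z + (h, 0)).1 - x₀‖ + ‖z.1 - x₀‖ := norm_sub_le _ _
    _ < 2 * R := by linarith

section PoincareProduct

variable {X Y W : Type*} [NormedAddCommGroup X] [NormedSpace ℝ X] [FiniteDimensional ℝ X]
  [MeasurableSpace X] [BorelSpace X] [NormedAddCommGroup Y] [NormedSpace ℝ Y]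
  [FiniteDimensional ℝ Y] [MeasurableSpace Y] [BorelSpace Y] [NormedAddCommGroup W]
  {m : Measure X} {k : Measure Y} [m.IsAddHaarMeasure] [k.IsAddHaarMeasure]

theorem setLIntegral_slice_eq_lintegral_translate {B : Set X} {I : Set Y} (hB : MeasurableSet B)
    (hI : MeasurableSet I) {G : X × Y → X × Y → ℝ≥0∞} (hG : Measurable (Function.uncurry G)) :
    ∫⁻ z in B ×ˢ I, (∫⁻ y in B, G z (y, z.2) ∂m) ∂(m.prod k) =
      ∫⁻ h, (∫⁻ z in B ×ˢ I ∩ (· + (h, 0)) ⁻¹' B ×ˢ I, G z (z + (h, 0)) ∂(m.prod k)) ∂m := by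
  have hQ := hB.prod hI
  let H : (X × Y) × X → ℝ≥0∞ := {w | w.1 ∈ B ×ˢ I ∧ w.1 + (w.2, 0) ∈ B ×ˢ I}.indicator
    fun w => G w.1 (w.1 + (w.2, 0))
  have hH : Measurable H := (hG.comp (by fun_prop :
      Measurable fun w : (X × Y) × X => (w.1, w.1 + (w.2, (0 : Y))))).indicator
    ((hQ.preimage measurable_fst).inter (hQ.preimage (by fun_prop)))
  calc ∫⁻ z in B ×ˢ I, (∫⁻ y in B, G z (y, z.2) ∂m) ∂(m.prod k)
      = ∫⁻ z, ∫⁻ h, H (z, h) ∂m ∂(m.prod k) := by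
        rw [← lintegral_indicator hQ]
        refine lintegral_congr fun z => ?_
        by_cases hz : z ∈ B ×ˢ I
        · rw [indicator_of_mem hz, ← lintegral_indicator hB, ← lintegral_add_left_eq_self _ z.1]
          refine lintegral_congr fun h => ?_
          by_cases hh : z.1 + h ∈ B <;> simp_all [H, indicator, Prod.add_def]
        · simp only [H, indicator, hz, mem_ofPred_eq, false_and, if_false, lintegral_zero]
    _ = ∫⁻ h, ∫⁻ z, H (z, h) ∂(m.prod k) ∂m := lintegral_lintegral_swap hH.aemeasurable
    _ = _ := by
        refine lintegral_congr fun h => ?_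
        rw [← lintegral_indicator (hQ.inter (hQ.preimage (by fun_prop)))]
        rfl

theorem lintegral_slice_sub_rpow_le [NormedSpace ℝ W] [CompleteSpace W] {f : X × Y → W}
    {D : X × Y → X →L[ℝ] W} {x₀ : X} {R : ℝ} {I : Set Y} (hI : IsOpen I) (hIc : Convex ℝ I)
    (hf : StronglyMeasurable f) (hfi : IntegrableOn f (Metric.ball x₀ R ×ˢ I) (m.prod k))
    (hD : IntegrableOn D (Metric.ball x₀ R ×ˢ I) (m.prod k))
    (hfD : ∀ h, HasWeakLineDeriv (m.prod k) (Metric.ball x₀ R ×ˢ I) (h, 0) f fun z => D z h)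
    {r : ℝ} (hr : 1 ≤ r) :
    ∫⁻ z in Metric.ball x₀ R ×ˢ I, (∫⁻ y in Metric.ball x₀ R, ‖f (y, z.2) - f z‖ₑ ^ r ∂m)
        ∂(m.prod k) ≤
      m (Metric.ball 0 (2 * R)) * (ENNReal.ofReal (2 * R) ^ r *
        ∫⁻ z in Metric.ball x₀ R ×ˢ I, ‖D z‖ₑ ^ r ∂(m.prod k)) := by
  have hBo : IsOpen (Metric.ball x₀ R) := Metric.isOpen_ball
  have hBall : MeasurableSet (Metric.ball (0 : X) (2 * R)) := Metric.isOpen_ball.measurableSet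
  have hG : Measurable fun w : (X × Y) × (X × Y) => ‖f w.2 - f w.1‖ₑ ^ r :=
    ((hf.comp_measurable measurable_snd).sub
      (hf.comp_measurable measurable_fst)).enorm.pow_const r
  rw [setLIntegral_slice_eq_lintegral_translate hBo.measurableSet hI.measurableSet
    (G := fun z w => ‖f w - f z‖ₑ ^ r) hG, mul_comm, ← setLIntegral_const,
    ← lintegral_indicator hBall]
  refine lintegral_mono fun h => ?_
  by_cases hh : h ∈ Metric.ball (0 : X) (2 * R)
  · rw [indicator_of_mem hh]
    have hDh : IntegrableOn (fun z => D z h) (Metric.ball x₀ R ×ˢ I) (m.prod k) :=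
      (ContinuousLinearMap.apply ℝ W h).integrable_comp hD
    have hle : ‖h‖ₑ ≤ ENNReal.ofReal (2 * R) := by
      rw [← ofReal_norm]
      exact ENNReal.ofReal_le_ofReal (mem_ball_zero_iff.1 hh).le
    have hDr : ∀ z, ‖D z h‖ₑ ^ r ≤ ENNReal.ofReal (2 * R) ^ r * ‖D z‖ₑ ^ r := fun z => by
      rw [← ENNReal.mul_rpow_of_nonneg _ _ (by linarith), mul_comm]
      exact ENNReal.rpow_le_rpow (((D z).le_opENorm h).trans (by gcongr)) (by linarith)
    refine ((hfD h).lintegral_translate_sub_rpow_le (hBo.prod hI) ((convex_ball x₀ R).prod hIc)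
      hfi hDh hr).trans ((lintegral_mono hDr).trans_eq ?_)
    exact lintegral_const_mul'' _ (hD.1.enorm.pow_const r)
  · rw [indicator_of_notMem hh]
    simp [ball_prod_inter_preimage_add_eq_empty hh I]

theorem lintegral_cond_slice_sub_rpow_le [NormedSpace ℝ W] [CompleteSpace W] {f : X × Y → W}
    {D : X × Y → X →L[ℝ] W} {x₀ : X} {R : ℝ} {I : Set Y} (hR : 0 < R) (hI : IsOpen I)
    (hIc : Convex ℝ I) (hf : StronglyMeasurable f)
    (hfi : IntegrableOn f (Metric.ball x₀ R ×ˢ I) (m.prod k))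
    (hD : IntegrableOn D (Metric.ball x₀ R ×ˢ I) (m.prod k))
    (hfD : ∀ h, HasWeakLineDeriv (m.prod k) (Metric.ball x₀ R ×ˢ I) (h, 0) f fun z => D z h)
    {r : ℝ} (hr : 1 ≤ r) :
    ∫⁻ z, (∫⁻ y, ‖f (y, z.2) - f z‖ₑ ^ r ∂m[|Metric.ball x₀ R])
        ∂(m.prod k)[|Metric.ball x₀ R ×ˢ I] ≤
      2 ^ Module.finrank ℝ X * (ENNReal.ofReal (2 * R) ^ r *
        ∫⁻ z, ‖D z‖ₑ ^ r ∂(m.prod k)[|Metric.ball x₀ R ×ˢ I]) := by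
  have hB₀ : m (Metric.ball x₀ R) ≠ 0 := (Metric.measure_ball_pos m x₀ hR).ne'
  have hball : (m (Metric.ball x₀ R))⁻¹ * m (Metric.ball 0 (2 * R)) =
      2 ^ Module.finrank ℝ X := by
    rw [← Measure.addHaar_ball_center m x₀ (2 * R), Measure.addHaar_ball_mul_of_pos m x₀ two_pos,
      ← Measure.addHaar_ball_center m x₀ R, mul_comm, mul_assoc,
      ENNReal.mul_inv_cancel hB₀ measure_ball_lt_top.ne, mul_one]
    simp
  have hslice := lintegral_slice_sub_rpow_le hI hIc hf hfi hD hfD hr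
  simp only [ProbabilityTheory.cond, lintegral_smul_measure, smul_eq_mul]
  rw [lintegral_const_mul']
  · calc _ ≤ _ := mul_le_mul_right (mul_le_mul_right hslice _) _
      _ = _ := by rw [← hball]; ring
  · exact ENNReal.inv_ne_top.2 hB₀

theorem eLpNorm_sub_comp_snd_le [NormedSpace ℝ W] [CompleteSpace W] {f : X × Y → W}
    {D : X × Y → X →L[ℝ] W} {x₀ : X} {R : ℝ} {I : Set Y} (hR : 0 < R) (hI : IsOpen I)
    (hIc : Convex ℝ I) (hf : StronglyMeasurable f)
    (hfi : IntegrableOn f (Metric.ball x₀ R ×ˢ I) (m.prod k))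
    (hD : IntegrableOn D (Metric.ball x₀ R ×ˢ I) (m.prod k))
    (hfD : ∀ h, HasWeakLineDeriv (m.prod k) (Metric.ball x₀ R ×ˢ I) (h, 0) f fun z => D z h)
    {r : ℝ} (hr : 1 ≤ r) {a : Y → W} {C : ℝ≥0∞} (hC : C ≠ ∞)
    (ha : ∀ᵐ z ∂(m.prod k)[|Metric.ball x₀ R ×ˢ I], ‖a z.2 - f z‖ₑ ≤
      C * eLpNorm (fun y => f (y, z.2) - f z) (ENNReal.ofReal r) m[|Metric.ball x₀ R]) :
    eLpNorm (fun z => f z - a z.2) (ENNReal.ofReal r) (m.prod k)[|Metric.ball x₀ R ×ˢ I] ≤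
      C * (2 ^ Module.finrank ℝ X * (ENNReal.ofReal (2 * R) *
        eLpNorm D (ENNReal.ofReal r) (m.prod k)[|Metric.ball x₀ R ×ˢ I])) := by
  have hr₀ : 0 < r := by linarith
  have hpoint : ∀ᵐ z ∂(m.prod k)[|Metric.ball x₀ R ×ˢ I], ‖f z - a z.2‖ₑ ^ r ≤
      C ^ r * ∫⁻ y, ‖f (y, z.2) - f z‖ₑ ^ r ∂m[|Metric.ball x₀ R] := ha.mono fun z hz => by
    rw [← eLpNorm_ofReal_rpow hr₀, ← ENNReal.mul_rpow_of_nonneg _ _ hr₀.le, enorm_sub_rev]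
    exact ENNReal.rpow_le_rpow hz hr₀.le
  have htwo : (2 : ℝ≥0∞) ^ Module.finrank ℝ X ≤ (2 ^ Module.finrank ℝ X) ^ r := by
    simpa using ENNReal.rpow_le_rpow_of_exponent_le (one_le_pow₀ one_le_two) hr
  refine (ENNReal.rpow_le_rpow_iff hr₀).1 ?_
  simp only [ENNReal.mul_rpow_of_nonneg _ _ hr₀.le, eLpNorm_ofReal_rpow hr₀]
  calc _ ≤ ∫⁻ z, C ^ r * ∫⁻ y, ‖f (y, z.2) - f z‖ₑ ^ r ∂m[|Metric.ball x₀ R]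
        ∂(m.prod k)[|Metric.ball x₀ R ×ˢ I] := lintegral_mono_ae hpoint
    _ = C ^ r * ∫⁻ z, (∫⁻ y, ‖f (y, z.2) - f z‖ₑ ^ r ∂m[|Metric.ball x₀ R])
        ∂(m.prod k)[|Metric.ball x₀ R ×ˢ I] :=
      lintegral_const_mul' _ _ (ENNReal.rpow_ne_top_of_nonneg hr₀.le hC)
    _ ≤ _ := by
      gcongr
      exact (lintegral_cond_slice_sub_rpow_le hR hI hIc hf hfi hD hfD hr).trans (by gcongr)

end PoincareProduct

theorem memLp_cond_of_subset {Z V : Type*} [MeasurableSpace Z] [NormedAddCommGroup V]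
    {m : Measure Z} {f : Z → V} {e : ℝ≥0∞} {s t : Set Z} (hf : MemLp f e (m.restrict t))
    (hst : s ⊆ t) (hs : m s ≠ 0) : MemLp f e m[|s] :=
  (hf.mono_measure (Measure.restrict_mono hst le_rfl)).smul_measure (ENNReal.inv_ne_top.2 hs)

theorem ae_memLp_slice {X Y V : Type*} [MeasurableSpace X] [MeasurableSpace Y]
    [NormedAddCommGroup V] {P : Measure X} {k : Measure Y} [IsFiniteMeasure P] [IsFiniteMeasure k]
    {f : X × Y → V} {r : ℝ} (hf : StronglyMeasurable f) (hr : 0 < r)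
    (hfr : MemLp f (ENNReal.ofReal r) (P.prod k)) :
    ∀ᵐ t ∂k, MemLp (fun x => f (x, t)) (ENNReal.ofReal r) P := by
  filter_upwards [(integrable_norm_rpow hr le_rfl hfr).prod_left_ae] with t ht
  have hft : AEStronglyMeasurable (fun x => f (x, t)) P :=
    (hf.comp_measurable measurable_prodMk_right).aestronglyMeasurable
  rw [← integrable_norm_rpow_iff hft (by simpa using hr) ENNReal.ofReal_ne_top,
    ENNReal.toReal_ofReal hr.le]
  exact ht

theorem memLp_and_lpNorm_le_of_eLpNorm_le {X V W : Type*} [MeasurableSpace X]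
    [NormedAddCommGroup V] [NormedAddCommGroup W] {P : Measure X} {f : X → V} {g : X → W}
    {e : ℝ≥0∞} {C : ℝ} (hC : 0 ≤ C) (hf : AEStronglyMeasurable f P) (hg : MemLp g e P)
    (h : eLpNorm f e P ≤ ENNReal.ofReal C * eLpNorm g e P) :
    MemLp f e P ∧ lpNorm f e P ≤ C * lpNorm g e P := by
  rw [← ofReal_lpNorm hg, ← ENNReal.ofReal_mul hC] at h
  refine ⟨⟨hf, h.trans_lt ENNReal.ofReal_lt_top⟩, ?_⟩
  rw [← toReal_eLpNorm hf]
  exact ENNReal.toReal_le_of_le_ofReal (mul_nonneg hC lpNorm_nonneg) h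

section PowMean

variable {X V : Type*} [MeasurableSpace X] [NormedAddCommGroup V] [InnerProductSpace ℝ V]

/-- The mean `(∫ η |v|^{s-1} v)^{⟨1/s⟩}` of `v` with weight `η`, adapted to the power nonlinearity
`w ↦ |w|^{s-1} w` under the time derivative of the equation. -/
def powMean (s : ℝ) (P : Measure X) (η : X → ℝ) (v : X → V) : V :=
  powMap s⁻¹ (∫ x, η x • powMap s (v x) ∂P)

theorem powMap_powMean {s : ℝ} (hs : s ≠ 0) (P : Measure X) (η : X → ℝ) (v : X → V) :
    powMap s (powMean s P η v) = ∫ x, η x • powMap s (v x) ∂P :=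
  powMap_powMap_inv hs _

theorem integrable_powMap {P : Measure X} [IsFiniteMeasure P] {s r : ℝ} (hs : 0 < s)
    (hsr : s ≤ r) {v : X → V} (hv : MemLp v (ENNReal.ofReal r) P) :
    Integrable (fun x => powMap s (v x)) P := by
  refine (integrable_norm_iff (aestronglyMeasurable_powMap hv.1 s)).1 ?_
  simpa only [norm_powMap hs.ne'] using integrable_norm_rpow hs hsr hv

theorem integral_smul_sub_const [CompleteSpace V] {P : Measure X} {η : X → ℝ} {w : X → V}
    (hη : Integrable η P) (hη₁ : ∫ x, η x ∂P = 1) (hw : Integrable (fun x => η x • w x) P)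
    (c : V) : (∫ x, η x • w x ∂P) - c = ∫ x, η x • (w x - c) ∂P := by
  simp_rw [smul_sub]
  rw [integral_sub hw (hη.smul_const _), integral_smul_const, hη₁, one_smul]

theorem norm_integral_smul_powMap_sub_le [CompleteSpace V] {P : Measure X}
    [IsProbabilityMeasure P] {η : X → ℝ} {M s r : ℝ} (hη : AEStronglyMeasurable η P)
    (hη₀ : ∀ x, 0 ≤ η x) (hηM : ∀ x, η x ≤ M) (hη₁ : ∫ x, η x ∂P = 1) (hs : 1 ≤ s)
    (hsr : s ≤ r) {v : X → V} (hv : MemLp v (ENNReal.ofReal r) P) (c : V) :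
    ‖(∫ x, η x • powMap s (v x) ∂P) - powMap s c‖ ≤
      M * ((s + 1) * 2 ^ s) * (lpNorm (fun x => v x - c) (ENNReal.ofReal r) P ^ s +
        ‖c‖ ^ (s - 1) * lpNorm (fun x => v x - c) (ENNReal.ofReal r) P) := by
  have hs₀ : 0 < s := by linarith
  obtain ⟨x₀⟩ := P.nonempty_of_neZero
  have hM : 0 ≤ M := (hη₀ x₀).trans (hηM x₀)
  have hvc : MemLp (fun x => v x - c) (ENNReal.ofReal r) P := hv.sub (memLp_const c)
  have hηb : ∀ᵐ x ∂P, ‖η x‖ ≤ M := ae_of_all _ fun x => by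
    rw [Real.norm_of_nonneg (hη₀ x)]
    exact hηM x
  have hint : Integrable η P := (integrable_const M).mono' hη hηb
  have hsmul : Integrable (fun x => η x • powMap s (v x)) P :=
    (integrable_powMap hs₀ hsr hv).bdd_smul M hη hηb
  have hpow := integrable_norm_rpow hs₀ hsr hvc
  have hone : Integrable (fun x => ‖v x - c‖) P := by
    simpa using integrable_norm_rpow one_pos (hs.trans hsr) hvc
  have hone_le : ∫ x, ‖v x - c‖ ∂P ≤ lpNorm (fun x => v x - c) (ENNReal.ofReal r) P := by
    simpa using integral_norm_rpow_le_lpNorm_rpow one_pos (hs.trans hsr) hvc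
  rw [integral_smul_sub_const hint hη₁ hsmul]
  calc ‖∫ x, η x • (powMap s (v x) - powMap s c) ∂P‖
      ≤ ∫ x, M * ((s + 1) * 2 ^ s) * (‖v x - c‖ ^ s + ‖c‖ ^ (s - 1) * ‖v x - c‖) ∂P := by
        refine norm_integral_le_of_norm_le ((hpow.add (hone.const_mul _)).const_mul _)
          (hηb.mono fun x hx => ?_)
        rw [norm_smul, mul_assoc]
        exact mul_le_mul hx (norm_powMap_sub_powMap_le _ _ hs) (norm_nonneg _) hM
    _ = M * ((s + 1) * 2 ^ s) *
        ((∫ x, ‖v x - c‖ ^ s ∂P) + ‖c‖ ^ (s - 1) * ∫ x, ‖v x - c‖ ∂P) := by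
        rw [integral_const_mul, integral_add hpow (hone.const_mul _), integral_const_mul]
    _ ≤ _ := by
        gcongr
        exact integral_norm_rpow_le_lpNorm_rpow hs₀ hsr hvc

/-- The constant with which `powMean` is a quasi-best approximation among constants. -/
def powMeanConst (s M : ℝ) : ℝ := (2 ^ s + 2) * (M * ((s + 1) * 2 ^ s))

theorem one_le_powMeanConst {s M : ℝ} (hs : 1 ≤ s) (hM : 1 ≤ M) : 1 ≤ powMeanConst s M := by
  have htwo : (1 : ℝ) ≤ 2 ^ s := Real.one_le_rpow one_le_two (by linarith)
  exact one_le_mul_of_one_le_of_one_le (by linarith)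
    (one_le_mul_of_one_le_of_one_le hM (one_le_mul_of_one_le_of_one_le (by linarith) htwo))

theorem norm_powMean_sub_le [CompleteSpace V] {P : Measure X} [IsProbabilityMeasure P]
    {η : X → ℝ} {M s r : ℝ} (hη : AEStronglyMeasurable η P) (hη₀ : ∀ x, 0 ≤ η x)
    (hηM : ∀ x, η x ≤ M) (hM : 1 ≤ M) (hη₁ : ∫ x, η x ∂P = 1) (hs : 1 ≤ s) (hsr : s ≤ r)
    {v : X → V} (hv : MemLp v (ENNReal.ofReal r) P) (c : V) :
    ‖powMean s P η v - c‖ ≤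
      powMeanConst s M * lpNorm (fun x => v x - c) (ENNReal.ofReal r) P := by
  refine le_mul_of_rpow_add_le lpNorm_nonneg (by positivity : 0 ≤ ‖c‖ ^ (s - 1)) hs
    (one_le_powMeanConst hs hM) ?_
  calc _ ≤ (2 ^ s + 2) * ‖powMap s (powMean s P η v) - powMap s c‖ := norm_sub_rpow_add_le _ _ hs
    _ ≤ _ := by
      rw [powMap_powMean (by linarith), powMeanConst, mul_assoc]
      gcongr
      exact norm_integral_smul_powMap_sub_le hη hη₀ hηM hη₁ hs hsr hv c

end PowMean

section Intrinsic

variable {Z V : Type*} [MeasurableSpace Z] [NormedAddCommGroup V] {P : Measure Z}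
  [IsProbabilityMeasure P]

theorem lpNorm_le_of_ae_norm_le {a : Z → V} {κ : ℝ} (hκ : 0 ≤ κ) (h : ∀ᵐ z ∂P, ‖a z‖ ≤ κ)
    (e : ℝ≥0∞) : lpNorm a e P ≤ κ := by
  by_cases ha : AEStronglyMeasurable a P
  · rw [← toReal_eLpNorm ha]
    exact ENNReal.toReal_le_of_le_ofReal hκ ((eLpNorm_le_of_ae_bound h).trans_eq (by simp))
  · rwa [lpNorm_of_not_aestronglyMeasurable ha]

theorem lpNorm_sub_integral_le [NormedSpace ℝ V] [CompleteSpace V] {f : Z → V} {q : ℝ}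
    (hq : 1 ≤ q) (hf : MemLp f (ENNReal.ofReal q) P) (b : V) :
    lpNorm (fun z => f z - ∫ w, f w ∂P) (ENNReal.ofReal q) P ≤
      2 * lpNorm (fun z => f z - b) (ENNReal.ofReal q) P := by
  have hq' : 1 ≤ ENNReal.ofReal q := by simpa
  have hfb : MemLp (fun z => f z - b) (ENNReal.ofReal q) P := hf.sub (memLp_const b)
  have hmean : ‖b - ∫ w, f w ∂P‖ ≤ lpNorm (fun z => f z - b) (ENNReal.ofReal q) P := by
    have hint : b - ∫ w, f w ∂P = -∫ w, (f w - b) ∂P := by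
      rw [integral_sub (hf.integrable hq') (integrable_const b)]
      simp
    rw [hint, norm_neg]
    refine (norm_integral_le_integral_norm _).trans ?_
    simpa using integral_norm_rpow_le_lpNorm_rpow one_pos hq hfb
  have hconst : lpNorm (fun _ => b - ∫ w, f w ∂P) (ENNReal.ofReal q) P ≤
      lpNorm (fun z => f z - b) (ENNReal.ofReal q) P :=
    lpNorm_le_of_ae_norm_le lpNorm_nonneg (ae_of_all _ fun _ => hmean) _
  have hadd := lpNorm_add_le (g := fun _ => b - ∫ w, f w ∂P) hfb hq'
  simp only [Pi.add_def, sub_add_sub_cancel] at hadd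
  linarith

variable {a : Z → V} {s C μ X M : ℝ}

theorem exists_ae_norm_sub_le_of_le (hs : 1 ≤ s) (hC : 1 ≤ C) (hM : 1 ≤ M) (hμ : 0 ≤ μ)
    (hX : 0 ≤ X) (hμM : μ ≤ M)
    (h : ∀ᵐ z' ∂P, ∀ᵐ z ∂P,
      ‖a z - a z'‖ ^ s + ‖a z'‖ ^ (s - 1) * ‖a z - a z'‖ ≤ C * (μ ^ (s - 1) * X ^ s)) :
    ∃ b, ∀ᵐ z ∂P, ‖a z - b‖ ≤ C * M ^ (s - 1) * X := by
  obtain ⟨z', hz'⟩ := h.exists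
  refine ⟨a z', hz'.mono fun z hz => ?_⟩
  have hCM : 1 ≤ C * M ^ (s - 1) :=
    one_le_mul_of_one_le_of_one_le hC (Real.one_le_rpow hM (by linarith))
  refine (Real.rpow_le_rpow_iff (norm_nonneg _) (by positivity) (by linarith : 0 < s)).1 ?_
  calc ‖a z - a z'‖ ^ s ≤ C * (μ ^ (s - 1) * X ^ s) :=
        (le_add_of_nonneg_right (by positivity)).trans hz
    _ ≤ C * (M ^ (s - 1) * X ^ s) := by gcongr
    _ = C * M ^ (s - 1) * X ^ s := by ring
    _ ≤ (C * M ^ (s - 1)) ^ s * X ^ s := by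
        gcongr
        exact Real.self_le_rpow_of_one_le hCM hs
    _ = (C * M ^ (s - 1) * X) ^ s := (Real.mul_rpow (by linarith) hX).symm

theorem exists_ae_norm_sub_le_of_lt_lpNorm (hs : 1 ≤ s) (hM : 0 < M) (hμ : 0 < μ) (hX : 0 < X)
    (e : ℝ≥0∞) (ha : μ * X < M * lpNorm a e P)
    (h : ∀ᵐ z' ∂P, ∀ᵐ z ∂P,
      ‖a z - a z'‖ ^ s + ‖a z'‖ ^ (s - 1) * ‖a z - a z'‖ ≤ C * (μ ^ (s - 1) * X ^ s)) :
    ∃ b, ∀ᵐ z ∂P, ‖a z - b‖ ≤ C * M ^ (s - 1) * X := by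
  have hlarge : ∃ᶠ z in ae P, μ * X / M < ‖a z‖ := fun hsmall => by
    have hle := lpNorm_le_of_ae_norm_le (κ := μ * X / M) (by positivity)
      (hsmall.mono fun z hz => not_lt.1 hz) e
    rw [le_div_iff₀ hM] at hle
    linarith
  obtain ⟨z', hz'a, hz'⟩ := (hlarge.and_eventually h).exists
  refine ⟨a z', hz'.mono fun z hz => ?_⟩
  have hpos : 0 < (μ * X / M) ^ (s - 1) := by positivity
  refine le_of_mul_le_mul_left ?_ hpos
  calc (μ * X / M) ^ (s - 1) * ‖a z - a z'‖ ≤ ‖a z'‖ ^ (s - 1) * ‖a z - a z'‖ := by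
        gcongr
    _ ≤ C * (μ ^ (s - 1) * X ^ s) := (le_add_of_nonneg_left (by positivity)).trans hz
    _ = (μ * X / M) ^ (s - 1) * (C * M ^ (s - 1) * X) := by
        rw [Real.div_rpow (by positivity) hM.le, Real.mul_rpow hμ.le hX.le,
          show X ^ s = X ^ (s - 1) * X by rw [← Real.rpow_add_one hX.ne', sub_add_cancel]]
        field_simp

-- If `μ` is large, the intrinsic coupling forces `a` to be large somewhere, where the power map is
-- nondegenerate; if `μ` is small, the degenerate estimate already has the right scaling.
theorem exists_ae_norm_sub_le_of_intrinsic {f : Z → V} {e : ℝ≥0∞} {C₁ K Y : ℝ} (he : 1 ≤ e)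
    (hs : 1 ≤ s) (hC : 1 ≤ C) (hC₁ : 1 ≤ C₁) (hK : 1 ≤ K) (hμ : 0 < μ) (hX : 0 ≤ X)
    (hXY : X ≤ Y) (ha : MemLp a e P) (hfa : lpNorm (fun z => f z - a z) e P ≤ C₁ * Y)
    (hK_intrinsic : μ * Y ≤ K * lpNorm f e P ∨ μ ≤ K)
    (h : ∀ᵐ z' ∂P, ∀ᵐ z ∂P,
      ‖a z - a z'‖ ^ s + ‖a z'‖ ^ (s - 1) * ‖a z - a z'‖ ≤ C * (μ ^ (s - 1) * X ^ s)) :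
    ∃ b, ∀ᵐ z ∂P, ‖a z - b‖ ≤ C * (4 * C₁ * K) ^ (s - 1) * X := by
  have hCK : 1 ≤ C₁ * K := one_le_mul_of_one_le_of_one_le hC₁ hK
  have hKC : K ≤ C₁ * K := le_mul_of_one_le_left (by linarith) hC₁
  rcases le_or_gt μ (2 * C₁ * K) with hμK | hμK
  · exact exists_ae_norm_sub_le_of_le hs hC (by linarith) hμ.le hX (by linarith) h
  rcases hX.eq_or_lt with rfl | hX
  · refine exists_ae_norm_sub_le_of_le hs hC (by linarith) zero_le_one le_rfl (by linarith) ?_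
    simpa [Real.zero_rpow (by linarith : s ≠ 0)] using h
  have hf : lpNorm f e P ≤ lpNorm a e P + C₁ * Y := by
    have hadd := lpNorm_add_le (g := fun z => f z - a z) ha he
    simp only [Pi.add_def, add_sub_cancel] at hadd
    linarith
  have hμY : μ * Y ≤ K * lpNorm f e P := hK_intrinsic.resolve_right (by linarith)
  refine exists_ae_norm_sub_le_of_lt_lpNorm hs (by linarith) hμ hX e ?_ h
  have hμX : μ * X ≤ μ * Y := by gcongr
  have hY : 2 * C₁ * K * Y ≤ μ * Y := by gcongr; linarith
  have hKf : K * lpNorm f e P ≤ K * (lpNorm a e P + C₁ * Y) := by gcongr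
  have hpos : 0 < μ * X := by positivity
  have hKa : μ * X ≤ 2 * (K * lpNorm a e P) := by linarith
  have hC₁a : K * lpNorm a e P ≤ C₁ * (K * lpNorm a e P) :=
    le_mul_of_one_le_left (by linarith) hC₁
  linarith [hKa]

end Intrinsic

/-- The matrix-vector product `M h`, as a bilinear map. -/
def matVecLin : Mat N n →ₗ[ℝ] Spc n →ₗ[ℝ] Vec N :=
  LinearMap.mk₂ ℝ (fun M h => WithLp.toLp 2 fun i => ∑ j, M (i, j) * h j)
    (fun _ _ _ => by ext; simp [add_mul, Finset.sum_add_distrib])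
    (fun _ _ _ => by ext; simp [Finset.mul_sum, mul_assoc])
    (fun _ _ _ => by ext; simp [mul_add, Finset.sum_add_distrib])
    (fun _ _ _ => by ext; simp [Finset.mul_sum, mul_left_comm])

theorem norm_matVecLin_le (M : Mat N n) (h : Spc n) : ‖matVecLin M h‖ ≤ 1 * ‖M‖ * ‖h‖ := by
  refine le_of_sq_le_sq ?_ (by positivity)
  rw [one_mul, mul_pow, EuclideanSpace.real_norm_sq_eq, EuclideanSpace.real_norm_sq_eq,
    EuclideanSpace.real_norm_sq_eq, Fintype.sum_prod_type, Finset.sum_mul]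
  refine Finset.sum_le_sum fun i _ => ?_
  exact Finset.sum_mul_sq_le_sq_mul_sq Finset.univ (fun j => M (i, j)) h

/-- The matrix-vector product `M h` as a continuous bilinear map; `Mat N n` carries the Frobenius
norm, which dominates the operator norm. -/
def matVec : Mat N n →L[ℝ] Spc n →L[ℝ] Vec N :=
  matVecLin.mkContinuous₂ 1 norm_matVecLin_le

theorem matVec_apply (M : Mat N n) (h : Spc n) (i : Fin N) :
    matVec M h i = ∑ j, M (i, j) * h j := rfl

theorem norm_matVec_le (M : Mat N n) : ‖matVec M‖ ≤ ‖M‖ :=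
  ContinuousLinearMap.opNorm_le_bound _ (norm_nonneg _) fun h =>
    (norm_matVecLin_le M h).trans_eq (by rw [one_mul])

theorem pderivS_eq_fderiv {ψ : Spc n × ℝ → ℝ} (hψ : Differentiable ℝ ψ) (j : Fin n)
    (z : Spc n × ℝ) : pderivS j ψ z = fderiv ℝ ψ z (EuclideanSpace.single j 1, 0) := by
  have hslice : HasFDerivAt (fun y => ψ (y, z.2))
      ((fderiv ℝ ψ z).comp (ContinuousLinearMap.inl ℝ (Spc n) ℝ)) z.1 :=
    (hψ (z.1, z.2)).hasFDerivAt.comp z.1 (hasFDerivAt_prodMk_left z.1 z.2)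
  rw [pderivS, hslice.fderiv]
  rfl

theorem aestronglyMeasurable_caratheodory {Z Y V : Type*} [MeasurableSpace Z]
    [TopologicalSpace Y] [TopologicalSpace.MetrizableSpace Y] [SecondCountableTopology Y]
    [MeasurableSpace Y] [OpensMeasurableSpace Y] [NormedAddCommGroup V] [MeasurableSpace V]
    [BorelSpace V] [SecondCountableTopology V] {m : Measure Z} {A : Z → Y → V}
    (hA : ∀ w, Measurable fun z => A z w) (hc : ∀ᵐ z ∂m, Continuous (A z)) {f : Z → Y}
    (hf : Measurable f) : AEStronglyMeasurable (fun z => A z (f z)) m := by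
  classical
  set s := toMeasurable m {z | ¬ Continuous (A z)}
  have hs : MeasurableSet s := measurableSet_toMeasurable _ _
  have hs₀ : ∀ᵐ z ∂m, z ∉ s := by
    simpa [s, ae_iff] using hc
  have huncurry : StronglyMeasurable (Function.uncurry fun (w : Y) (z : Z) =>
      sᶜ.indicator (fun z => A z w) z) := by
    refine stronglyMeasurable_uncurry_of_continuous_of_stronglyMeasurable (fun z => ?_)
      fun w => ((hA w).indicator hs.compl).stronglyMeasurable
    by_cases hz : z ∈ s
    · simp [hz, continuous_const]
    · have hAz : Continuous (A z) := not_not.1 fun h => hz (subset_toMeasurable _ _ h)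
      simpa [hz] using hAz
  refine ⟨fun z => sᶜ.indicator (fun z' => A z' (f z)) z,
    huncurry.comp_measurable (hf.prodMk measurable_id), ?_⟩
  filter_upwards [hs₀] with z hz
  simp [hz]

section Gradient

variable {η : Spc n → ℝ}

theorem continuous_gradient (hη : ContDiff ℝ (⊤ : ℕ∞) η) : Continuous (gradient η) :=
  (InnerProductSpace.toDual ℝ (Spc n)).symm.continuous.comp (hη.continuous_fderiv (by simp))

theorem gradient_eq_zero_of_notMem_tsupport {x : Spc n} (hx : x ∉ tsupport η) :
    gradient η x = 0 := by
  rw [gradient, image_eq_zero_of_notMem_tsupport (f := fderiv ℝ η) fun h =>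
    hx (tsupport_fderiv_subset ℝ h), map_zero]

theorem gradient_apply (η : Spc n → ℝ) (x : Spc n) (j : Fin n) :
    gradient η x j = fderiv ℝ η x (EuclideanSpace.single j 1) := by
  have hdual : inner ℝ (gradient η x) (EuclideanSpace.single j 1) =
      fderiv ℝ η x (EuclideanSpace.single j 1) := InnerProductSpace.toDual_symm_apply
  rw [← hdual, EuclideanSpace.inner_single_right]
  simp

theorem integrable_matVec_gradient (hη : ContDiff ℝ (⊤ : ℕ∞) η) (hηc : HasCompactSupport η)
    {m : Measure (Spc n × ℝ)} {M : Spc n × ℝ → Mat N n} (hM : Integrable M m) :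
    Integrable (fun z => matVec (M z) (gradient η z.1)) m := by
  have hgc := continuous_gradient hη
  obtain ⟨C, hC⟩ := ((hηc.fderiv (𝕜 := ℝ)).comp_left
    (g := (InnerProductSpace.toDual ℝ (Spc n)).symm) (map_zero _)).exists_bound_of_continuous hgc
  refine (hM.norm.mul_const C).mono' (matVec.aestronglyMeasurable_comp₂ hM.1
    (hgc.comp continuous_fst).aestronglyMeasurable) (ae_of_all _ fun z => ?_)
  exact ((matVec (M z)).le_of_opNorm_le (norm_matVec_le _) _).trans (by gcongr; exact hC _)

end Gradient

section SplitTest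

variable {η : Spc n → ℝ} {ζ : ℝ → ℝ} {e : Vec N}

/-- The test function `(x, t) ↦ ζ(t) η(x) e`, which separates the variables of the weak
formulation. -/
def splitTest (η : Spc n → ℝ) (ζ : ℝ → ℝ) (e : Vec N) (z : Spc n × ℝ) : Vec N :=
  (ζ z.2 * η z.1) • e

theorem contDiff_splitTest (hη : ContDiff ℝ (⊤ : ℕ∞) η) (hζ : ContDiff ℝ (⊤ : ℕ∞) ζ) :
    ContDiff ℝ (⊤ : ℕ∞) (splitTest η ζ e) :=
  ((hζ.comp contDiff_snd).mul (hη.comp contDiff_fst)).smul contDiff_const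

theorem tsupport_splitTest_subset :
    tsupport (splitTest η ζ e) ⊆ tsupport η ×ˢ tsupport ζ := by
  refine closure_minimal (fun z hz => ?_) ((isClosed_tsupport _).prod (isClosed_tsupport _))
  by_contra h
  rw [mem_prod, not_and_or] at h
  refine hz ?_
  rcases h with h | h <;> simp [splitTest, image_eq_zero_of_notMem_tsupport h]

theorem hasCompactSupport_splitTest (hηc : HasCompactSupport η) (hζc : HasCompactSupport ζ) :
    HasCompactSupport (splitTest η ζ e) :=
  (hηc.isCompact.prod hζc.isCompact).of_isClosed_subset (isClosed_tsupport _)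
    tsupport_splitTest_subset

theorem inner_tderiv_splitTest (hζ : Differentiable ℝ ζ) (v : Vec N) (z : Spc n × ℝ) :
    inner ℝ v (tderiv (splitTest η ζ e) z) = inner ℝ e (deriv ζ z.2 • η z.1 • v) := by
  have hderiv : HasDerivAt (fun s => splitTest η ζ e (z.1, s)) ((deriv ζ z.2 * η z.1) • e) z.2 :=
    ((hζ z.2).hasDerivAt.mul_const (η z.1)).smul_const _
  rw [tderiv, hderiv.deriv, smul_smul, real_inner_smul_right, real_inner_smul_right,
    real_inner_comm]

theorem gradPair_splitTest (hη : Differentiable ℝ η) (M : Spc n × ℝ → Mat N n)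
    (z : Spc n × ℝ) :
    gradPair M (splitTest η ζ e) z = inner ℝ e (ζ z.2 • matVec (M z) (gradient η z.1)) := by
  have hpderiv : ∀ i j, pderivS j (fun w => splitTest η ζ e w i) z =
      ζ z.2 * gradient η z.1 j * e i := fun i j => by
    have hslice : (fun y => splitTest η ζ e (y, z.2) i) = fun y => ζ z.2 * e i * η y := by
      ext y
      simp only [splitTest, PiLp.smul_apply, smul_eq_mul]
      ring
    rw [gradient_apply, pderivS, hslice, fderiv_const_mul (hη _)]
    simp only [smul_apply, smul_eq_mul]
    ring
  rw [real_inner_smul_right, PiLp.inner_apply]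
  simp only [gradPair, hpderiv, matVec_apply, Finset.mul_sum, RCLike.inner_apply, conj_trivial,
    Finset.sum_mul]
  exact Finset.sum_congr rfl fun i _ => Finset.sum_congr rfl fun j _ => by ring

end SplitTest

theorem integrable_comp_smul {Z Y V : Type*} [MeasurableSpace Z] [TopologicalSpace Y]
    [MeasurableSpace Y] [OpensMeasurableSpace Y] [NormedAddCommGroup V] [NormedSpace ℝ V]
    {m : Measure Z} {θ : Y → ℝ} (hθ : Continuous θ) (hθc : HasCompactSupport θ) {g : Z → Y}
    (hg : Measurable g) {f : Z → V} (hf : Integrable f m) :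
    Integrable (fun z => θ (g z) • f z) m := by
  obtain ⟨C, hC⟩ := hθc.exists_bound_of_continuous hθ
  exact hf.bdd_smul C (hθ.measurable.comp hg).aestronglyMeasurable (ae_of_all _ fun z => hC _)

theorem hasWeakLineDeriv_integral_prod {X V : Type*} [MeasurableSpace X] [NormedAddCommGroup V]
    [NormedSpace ℝ V] {P : Measure X} [SFinite P] {I : Set ℝ} {W k : X × ℝ → V}
    (hW : Integrable W (P.prod (volume.restrict I)))
    (hk : Integrable k (P.prod (volume.restrict I)))
    (h : ∀ ζ : ℝ → ℝ, ContDiff ℝ (⊤ : ℕ∞) ζ → HasCompactSupport ζ → tsupport ζ ⊆ I →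
      ∫ z, deriv ζ z.2 • W z ∂(P.prod (volume.restrict I)) =
        -∫ z, ζ z.2 • k z ∂(P.prod (volume.restrict I))) :
    HasWeakLineDeriv volume I 1 (fun t => ∫ x, W (x, t) ∂P) fun t => ∫ x, k (x, t) ∂P :=
  fun ζ hζ hζc hζI => by
  have hζ' := hζ.continuous_deriv (by simp)
  have hfubini : ∀ {θ : ℝ → ℝ} {f : X × ℝ → V}, Continuous θ → HasCompactSupport θ →
      tsupport θ ⊆ I → Integrable f (P.prod (volume.restrict I)) →
      ∫ t, θ t • (∫ x, f (x, t) ∂P) = ∫ z, θ z.2 • f z ∂(P.prod (volume.restrict I)) :=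
    fun {θ f} hθ hθc hθI hf => by
    rw [integral_prod_symm (fun z => θ z.2 • f z) (integrable_comp_smul hθ hθc measurable_snd hf),
      ← setIntegral_eq_integral_of_forall_compl_eq_zero (s := I) fun t ht => by
        rw [image_eq_zero_of_notMem_tsupport fun h => ht (hθI h), zero_smul]]
    simp_rw [integral_smul]
  simp only [fderiv_apply_one_eq_deriv]
  rw [hfubini hζ' hζc.deriv (tsupport_deriv_subset.trans hζI) hW,
    hfubini hζ.continuous hζc hζI hk]
  exact h ζ hζ hζc hζI

section Cutoff

/-- A smooth bump on `ℝⁿ` concentrated on the ball of radius `1 / 2`. -/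
def unitBump (n : ℕ) : ContDiffBump (0 : Spc n) := ⟨1 / 4, 1 / 2, by norm_num, by norm_num⟩

/-- The smooth cutoff on the ball `B_R(x₀)`, normalized so that its average over this ball
is `1`. -/
def cutoff (x₀ : Spc n) (R : ℝ) (x : Spc n) : ℝ :=
  volume.real (Metric.ball (0 : Spc n) 1) * (unitBump n).normed volume (R⁻¹ • (x - x₀))

theorem contDiff_cutoff (x₀ : Spc n) (R : ℝ) : ContDiff ℝ (⊤ : ℕ∞) (cutoff x₀ R) :=
  contDiff_const.mul ((unitBump n).contDiff_normed.comp
    ((contDiff_const_smul _).comp (contDiff_id.sub contDiff_const)))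

theorem cutoff_nonneg (x₀ : Spc n) (R : ℝ) (x : Spc n) : 0 ≤ cutoff x₀ R x :=
  mul_nonneg measureReal_nonneg ((unitBump n).nonneg_normed _)

variable {x₀ : Spc n} {R : ℝ}

theorem support_cutoff_subset (hR : 0 < R) :
    Function.support (cutoff x₀ R) ⊆ Metric.closedBall x₀ (R / 2) := by
  intro x hx
  have hmem := (unitBump n).support_normed_eq (μ := volume) ▸
    Function.mem_support.2 (right_ne_zero_of_mul hx)
  rw [mem_ball_zero_iff, norm_smul, norm_inv, Real.norm_of_nonneg hR.le, inv_mul_lt_iff₀ hR,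
    show (unitBump n).rOut = 1 / 2 from rfl] at hmem
  rw [mem_closedBall_iff_norm]
  linarith

theorem hasCompactSupport_cutoff (hR : 0 < R) : HasCompactSupport (cutoff x₀ R) :=
  .of_support_subset_isCompact (isCompact_closedBall _ _) (support_cutoff_subset hR)

theorem tsupport_cutoff_subset (hR : 0 < R) : tsupport (cutoff x₀ R) ⊆ Metric.ball x₀ R :=
  (closure_minimal (support_cutoff_subset hR) Metric.isClosed_closedBall).trans
    (Metric.closedBall_subset_ball (by linarith))

theorem integral_cutoff (hR : 0 < R) :
    ∫ x, cutoff x₀ R x ∂(volume : Measure (Spc n))[|Metric.ball x₀ R] = 1 := by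
  have hV : 0 < volume.real (Metric.ball (0 : Spc n) 1) :=
    ENNReal.toReal_pos (Metric.measure_ball_pos _ _ one_pos).ne' measure_ball_lt_top.ne
  have hsupp : ∀ x ∉ Metric.ball x₀ R, cutoff x₀ R x = 0 := fun x hx =>
    image_eq_zero_of_notMem_tsupport fun h => hx (tsupport_cutoff_subset hR h)
  rw [ProbabilityTheory.cond, integral_smul_measure,
    setIntegral_eq_integral_of_forall_compl_eq_zero hsupp]
  unfold cutoff
  rw [integral_const_mul, integral_sub_right_eq_self (fun x => (unitBump n).normed _ (R⁻¹ • x)),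
    Measure.integral_comp_smul, (unitBump n).integral_normed, Measure.addHaar_ball_of_pos _ _ hR,
    ENNReal.toReal_inv, ENNReal.toReal_mul, ENNReal.toReal_ofReal (by positivity),
    ← measureReal_def, inv_pow, inv_inv, abs_of_pos (by positivity)]
  simp only [smul_eq_mul]
  field_simp

theorem exists_cutoff_le (n : ℕ) : ∃ M ≥ 1, ∀ (x₀ : Spc n) (R : ℝ) (x : Spc n),
    cutoff x₀ R x ≤ M := by
  obtain ⟨M, hM⟩ := (unitBump n).hasCompactSupport_normed.exists_bound_of_continuous
    ((unitBump n).continuous_normed (μ := volume))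
  refine ⟨max (volume.real (Metric.ball (0 : Spc n) 1) * M) 1, le_max_right _ _,
    fun x₀ R x => le_max_of_le_left ?_⟩
  exact mul_le_mul_of_nonneg_left ((Real.le_norm_self _).trans (hM _)) measureReal_nonneg

theorem exists_norm_gradient_cutoff_le (n : ℕ) : ∃ G ≥ 1, ∀ (x₀ : Spc n) (R : ℝ), 0 < R →
    ∀ x, ‖gradient (cutoff x₀ R) x‖ ≤ G / R := by
  set ζ := (unitBump n).normed volume
  have hζ : ContDiff ℝ (⊤ : ℕ∞) ζ := (unitBump n).contDiff_normed
  obtain ⟨M, hM⟩ := ((unitBump n).hasCompactSupport_normed.fderiv (𝕜 := ℝ)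
    |>.exists_bound_of_continuous (hζ.continuous_fderiv (by simp)))
  set V := volume.real (Metric.ball (0 : Spc n) 1)
  refine ⟨max (V * M) 1, le_max_right _ _, fun x₀ R hR x => ?_⟩
  have hderiv : HasFDerivAt (cutoff x₀ R)
      (V • (fderiv ℝ ζ (R⁻¹ • (x - x₀))).comp (R⁻¹ • ContinuousLinearMap.id ℝ (Spc n))) x :=
    HasFDerivAt.const_mul (HasFDerivAt.comp x ((hζ.differentiable (by simp)) _).hasFDerivAt
      (((hasFDerivAt_id x).sub_const x₀).const_smul R⁻¹)) V
  rw [gradient, LinearIsometryEquiv.norm_map, hderiv.fderiv, ContinuousLinearMap.comp_smul,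
    ContinuousLinearMap.comp_id, norm_smul, norm_smul, norm_inv, Real.norm_of_nonneg hR.le,
    Real.norm_of_nonneg measureReal_nonneg]
  calc V * (R⁻¹ * ‖fderiv ℝ ζ (R⁻¹ • (x - x₀))‖) ≤ V * (R⁻¹ * M) := by gcongr; exact hM _
    _ = V * M / R := by ring
    _ ≤ max (V * M) 1 / R := by gcongr; exact le_max_left _ _

end Cutoff
theorem HasWeakLineDeriv.ae_ae_powMean_le {X V : Type*} [MeasurableSpace X]
    [NormedAddCommGroup V] [InnerProductSpace ℝ V] [CompleteSpace V] {P : Measure X} {η : X → ℝ}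
    {s : ℝ} {I : Set ℝ} {v : X × ℝ → V} {k : ℝ → V}
    (h : HasWeakLineDeriv volume I 1 (fun t => ∫ x, η x • powMap s (v (x, t)) ∂P) k)
    (hs : 1 ≤ s) (hI : IsOpen I) (hIc : Convex ℝ I)
    (hv : IntegrableOn (fun t => ∫ x, η x • powMap s (v (x, t)) ∂P) I) (hk : IntegrableOn k I) :
    ∀ᵐ t' ∂volume.restrict I, ∀ᵐ t ∂volume.restrict I,
      ‖powMean s P η (fun x => v (x, t)) - powMean s P η fun x => v (x, t')‖ ^ s +
        ‖powMean s P η fun x => v (x, t')‖ ^ (s - 1) *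
          ‖powMean s P η (fun x => v (x, t)) - powMean s P η fun x => v (x, t')‖ ≤
      (2 ^ s + 2) * ∫ t in I, ‖k t‖ := by
  filter_upwards [h.ae_ae_norm_sub_le hI hIc hv hk] with t' ht'
  filter_upwards [ht'] with t ht
  refine (norm_sub_rpow_add_le _ _ hs).trans ?_
  rw [powMap_powMean (by linarith), powMap_powMean (by linarith)]
  gcongr

section Cylinder

variable {p K μ ρ : ℝ} {z₀ : Spc n × ℝ}

/-- The radius of the spatial ball of the cylinder `Q_ρ^{(μ)}` in the range `2 ≤ p`. -/
def parRadius (p μ ρ : ℝ) : ℝ := μ ^ ((2 - p) / p) * ρ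

theorem parRadius_pos (hμ : 0 < μ) (hρ : 0 < ρ) : 0 < parRadius p μ ρ := by
  unfold parRadius
  positivity

theorem parRadius_rpow (hμ : 0 ≤ μ) (hρ : 0 ≤ ρ) (r : ℝ) :
    parRadius p μ ρ ^ r = μ ^ (r * (2 - p) / p) * ρ ^ r := by
  rw [parRadius, Real.mul_rpow (by positivity) hρ, ← Real.rpow_mul hμ]
  congr 2
  ring

theorem parRadius_rpow_self (hp : p ≠ 0) (hμ : 0 ≤ μ) (hρ : 0 ≤ ρ) :
    parRadius p μ ρ ^ p = μ ^ (2 - p) * ρ ^ p := by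
  rw [parRadius_rpow hμ hρ, mul_div_cancel_left₀ _ hp]

theorem rpow_div_parRadius (hp : p ≠ 0) (hμ : 0 < μ) (hρ : 0 < ρ) :
    ρ ^ p / parRadius p μ ρ = μ ^ (p - 1 - 1) * parRadius p μ ρ ^ (p - 1) := by
  have hR := parRadius_pos (p := p) hμ hρ
  rw [div_eq_iff hR.ne', mul_assoc, ← Real.rpow_add_one hR.ne', sub_add_cancel,
    parRadius_rpow_self hp hμ.le hρ.le, ← mul_assoc, ← Real.rpow_add hμ]
  simp [sub_sub, one_add_one_eq_two]

theorem parCyl_eq_prod (hp : 2 ≤ p) (μ ρ : ℝ) (z₀ : Spc n × ℝ) :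
    parCyl p μ ρ z₀ =
      Metric.ball z₀.1 (parRadius p μ ρ) ×ˢ Ioo (z₀.2 - ρ ^ p) (z₀.2 + ρ ^ p) := by
  rw [parCyl, if_neg hp.not_gt, parRadius]

theorem volume_ball_parRadius_ne_zero (hμ : 0 < μ) (hρ : 0 < ρ) (x₀ : Spc n) :
    volume (Metric.ball x₀ (parRadius p μ ρ)) ≠ 0 :=
  (Metric.measure_ball_pos _ _ (parRadius_pos hμ hρ)).ne'

theorem volume_Ioo_sub_add_ne_zero (hρ : 0 < ρ) (t₀ : ℝ) :
    volume (Ioo (t₀ - ρ ^ p) (t₀ + ρ ^ p)) ≠ 0 :=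
  (isOpen_Ioo.measure_pos _ (nonempty_Ioo.2 (by
    have := Real.rpow_pos_of_pos hρ p
    linarith))).ne'

theorem volume_parCyl_ne_zero (hp : 2 ≤ p) (hμ : 0 < μ) (hρ : 0 < ρ) (z₀ : Spc n × ℝ) :
    volume (parCyl p μ ρ z₀) ≠ 0 := by
  rw [parCyl_eq_prod hp, Measure.volume_eq_prod, Measure.prod_prod]
  exact mul_ne_zero (volume_ball_parRadius_ne_zero hμ hρ _) (volume_Ioo_sub_add_ne_zero hρ _)

theorem isProbabilityMeasure_cond_parCyl (hp : 2 ≤ p) (hμ : 0 < μ) (hρ : 0 < ρ)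
    (z₀ : Spc n × ℝ) :
    IsProbabilityMeasure (volume : Measure (Spc n × ℝ))[|parCyl p μ ρ z₀] := by
  refine ProbabilityTheory.cond_isProbabilityMeasure_of_finite
    (volume_parCyl_ne_zero hp hμ hρ z₀) ?_
  rw [parCyl_eq_prod hp, Measure.volume_eq_prod, Measure.prod_prod]
  exact ENNReal.mul_ne_top measure_ball_lt_top.ne measure_Ioo_lt_top.ne

theorem SuperIntrinsic.mul_lpNorm_le {u : Spc n × ℝ → Vec N} {Du F : Spc n × ℝ → Mat N n}
    (h : SuperIntrinsic p K μ ρ z₀ u Du F) (hp : 2 ≤ p) (hμ : 0 < μ) (hρ : 0 < ρ)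
    (hu : MemLp u (ENNReal.ofReal p) volume[|parCyl p μ ρ z₀])
    (hDu : MemLp Du (ENNReal.ofReal p) volume[|parCyl p μ ρ z₀])
    (hF : MemLp F (ENNReal.ofReal p) volume[|parCyl p μ ρ z₀]) :
    μ * (parRadius p μ ρ * lpNorm (fun z => ‖Du z‖ + ‖F z‖) (ENNReal.ofReal p)
        volume[|parCyl p μ ρ z₀]) ≤
      2 * max K 1 * lpNorm u (ENNReal.ofReal p) volume[|parCyl p μ ρ z₀] ∨
    μ ≤ 2 * max K 1 := by
  have := isProbabilityMeasure_cond_parCyl hp hμ hρ z₀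
  have hp₀ : 0 < p := by linarith
  have hR := parRadius_pos (p := p) hμ hρ
  have hK : K ≤ (max K 1) ^ p :=
    (le_max_left _ _).trans (Real.self_le_rpow_of_one_le (le_max_right _ _) (by linarith))
  refine h.imp (fun h => ?_) fun h => ?_
  · rw [setAverage_eq', setAverage_eq', ← ProbabilityTheory.cond, integral_div,
      integral_norm_rpow_eq_lpNorm_rpow hp₀ hu.1, max_eq_left hp,
      ← parRadius_rpow_self hp₀.ne' hμ.le hρ.le, ← mul_div_assoc, le_div_iff₀ (by positivity)] at h
    have hg := lpNorm_norm_add_norm_rpow_le hp₀ hDu hF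
    set G := lpNorm (fun z => ‖Du z‖ + ‖F z‖) (ENNReal.ofReal p) volume[|parCyl p μ ρ z₀]
    set U := lpNorm u (ENNReal.ofReal p) volume[|parCyl p μ ρ z₀]
    have hG : 0 ≤ G := lpNorm_nonneg
    have hU : 0 ≤ U := lpNorm_nonneg
    refine (Real.rpow_le_rpow_iff (by positivity) (by positivity) hp₀).1 ?_
    calc (μ * (parRadius p μ ρ * G)) ^ p
        = μ ^ p * parRadius p μ ρ ^ p * G ^ p := by
          rw [Real.mul_rpow hμ.le (by positivity), Real.mul_rpow hR.le hG, mul_assoc]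
      _ ≤ μ ^ p * parRadius p μ ρ ^ p *
            (2 ^ p * ∫ z, (‖Du z‖ ^ p + ‖F z‖ ^ p) ∂volume[|parCyl p μ ρ z₀]) := by gcongr
      _ ≤ 2 ^ p * (K * U ^ p) := by
          rw [mul_comm (2 ^ p), ← mul_assoc, mul_right_comm (μ ^ p), mul_comm _ (2 ^ p)]
          gcongr
      _ ≤ 2 ^ p * ((max K 1) ^ p * U ^ p) := by gcongr
      _ = (2 * max K 1 * U) ^ p := by
          rw [Real.mul_rpow (by positivity) hU, Real.mul_rpow zero_le_two (by positivity),
            mul_assoc]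
  · have : μ ≤ max K 1 :=
      (Real.rpow_le_rpow_iff hμ.le (by positivity) hp₀).1 (h.trans hK)
    linarith [le_max_right K 1]

end Cylinder

section WeakSolution

variable {p ν L T : ℝ} {Ω : Set (Spc n)} {A : Spc n × ℝ → Vec N → Mat N n → Mat N n}
  {F Du : Spc n × ℝ → Mat N n} {u : Spc n × ℝ → Vec N}

theorem WeakSolution.measurableSet (hsol : WeakSolution p ν L T Ω A F u Du) :
    MeasurableSet (Ω ×ˢ Ioo 0 T) :=
  (hsol.openΩ.prod isOpen_Ioo).measurableSet

theorem WeakSolution.isFiniteMeasure_restrict (hsol : WeakSolution p ν L T Ω A F u Du) :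
    IsFiniteMeasure (volume.restrict (Ω ×ˢ Ioo 0 T)) :=
  MeasureTheory.isFiniteMeasure_restrict.2
    (hsol.bddΩ.prod (Metric.isBounded_Ioo 0 T)).measure_lt_top.ne

theorem WeakSolution.integrableOn_of_memLp (hsol : WeakSolution p ν L T Ω A F u Du) (hp : 1 ≤ p)
    {V : Type*} [NormedAddCommGroup V] {f : Spc n × ℝ → V}
    (hf : MemLp f (ENNReal.ofReal p) (volume.restrict (Ω ×ˢ Ioo 0 T))) :
    IntegrableOn f (Ω ×ˢ Ioo 0 T) :=
  have := hsol.isFiniteMeasure_restrict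
  hf.integrable (by simpa)

theorem WeakSolution.hasWeakLineDeriv_apply (hsol : WeakSolution p ν L T Ω A F u Du) (i : Fin N)
    (j : Fin n) : HasWeakLineDeriv volume (Ω ×ˢ Ioo 0 T) (EuclideanSpace.single j 1, 0)
      (fun z => u z i) fun z => Du z (i, j) := fun ψ hψ hψc hψU => by
  have hweak := hsol.weakGrad ψ hψ hψc hψU i j
  simp_rw [pderivS_eq_fderiv (hψ.differentiable (by simp)), mul_comm (u _ i),
    mul_comm (Du _ (i, j))] at hweak
  simp_rw [smul_eq_mul]
  rwa [setIntegral_eq_integral_of_forall_compl_eq_zero,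
    setIntegral_eq_integral_of_forall_compl_eq_zero] at hweak
  · intro z hz
    rw [image_eq_zero_of_notMem_tsupport fun h => hz (hψU h), zero_mul]
  · intro z hz
    rw [image_eq_zero_of_notMem_tsupport (f := fderiv ℝ ψ) fun h =>
      hz (hψU (tsupport_fderiv_subset ℝ h)), zero_apply, zero_mul]

theorem WeakSolution.hasWeakLineDeriv (hsol : WeakSolution p ν L T Ω A F u Du) (hp : 1 ≤ p)
    (h : Spc n) :
    HasWeakLineDeriv volume (Ω ×ˢ Ioo 0 T) (h, 0) u fun z => matVec (Du z) h := by
  have hu := hsol.integrableOn_of_memLp hp hsol.memLp_u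
  have hDu := hsol.integrableOn_of_memLp hp hsol.memLp_Du
  have hsum : ((h, 0) : Spc n × ℝ) = ∑ j, h j • (EuclideanSpace.single j (1 : ℝ), (0 : ℝ)) := by
    ext1
    · simpa [Prod.fst_sum] using ((EuclideanSpace.basisFun (Fin n) ℝ).sum_repr h).symm
    · simp [Prod.snd_sum]
  refine hasWeakLineDeriv_of_apply hu ((matVec.flip h).integrable_comp hDu) fun i => ?_
  simp_rw [matVec_apply, hsum, mul_comm _ (h _)]
  refine HasWeakLineDeriv.sum ((EuclideanSpace.proj (𝕜 := ℝ) i).integrable_comp hu)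
    (fun j _ => ((EuclideanSpace.proj (𝕜 := ℝ) (i, j)).integrable_comp hDu).const_mul (h j))
    fun j _ => (hsol.hasWeakLineDeriv_apply i j).const_smul (h j)

/-- The total flux `A(x,t,u,Du) + |F|^{p-2}F`, in terms of which the system reads
`∂_t(|u|^{p-2}u) = div flux`. -/
def flux (p : ℝ) (A : Spc n × ℝ → Vec N → Mat N n → Mat N n) (F : Spc n × ℝ → Mat N n)
    (u : Spc n × ℝ → Vec N) (Du : Spc n × ℝ → Mat N n) (z : Spc n × ℝ) : Mat N n :=
  A z (u z) (Du z) + powMap (p - 1) (F z)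

theorem WeakSolution.integrableOn_vectorField (hsol : WeakSolution p ν L T Ω A F u Du)
    (hp : 1 < p) : IntegrableOn (fun z => A z (u z) (Du z)) (Ω ×ˢ Ioo 0 T) := by
  have := hsol.isFiniteMeasure_restrict
  have hbound := integrable_norm_rpow (by linarith : 0 < p - 1) (by linarith) hsol.memLp_Du
  refine (hbound.const_mul L).mono'
    (aestronglyMeasurable_caratheodory (A := fun z (q : Vec N × Mat N n) => A z q.1 q.2)
      (fun q => hsol.measA q.1 q.2) hsol.contA (hsol.measu.prodMk hsol.measDu)) ?_
  filter_upwards [hsol.growth] with z hz using hz _ _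

theorem WeakSolution.integrableOn_flux (hsol : WeakSolution p ν L T Ω A F u Du) (hp : 1 < p) :
    IntegrableOn (flux p A F u Du) (Ω ×ˢ Ioo 0 T) :=
  have := hsol.isFiniteMeasure_restrict
  (hsol.integrableOn_vectorField hp).add
    (integrable_powMap (by linarith) (by linarith) hsol.memLp_F)

theorem WeakSolution.ae_norm_flux_le (hsol : WeakSolution p ν L T Ω A F u Du) (hp : 1 < p) :
    ∀ᵐ z ∂volume.restrict (Ω ×ˢ Ioo 0 T),
      ‖flux p A F u Du z‖ ≤ (L + 1) * (‖Du z‖ + ‖F z‖) ^ (p - 1) := by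
  have hL : 0 ≤ L := hsol.hν.le.trans hsol.hνL
  filter_upwards [hsol.growth] with z hz
  calc ‖flux p A F u Du z‖ ≤ L * ‖Du z‖ ^ (p - 1) + ‖F z‖ ^ (p - 1) := by
        refine (norm_add_le _ _).trans (add_le_add (hz _ _) ?_)
        rw [norm_powMap (by linarith)]
    _ ≤ L * (‖Du z‖ + ‖F z‖) ^ (p - 1) + (‖Du z‖ + ‖F z‖) ^ (p - 1) := by
        gcongr <;> first | linarith | simp
    _ = (L + 1) * (‖Du z‖ + ‖F z‖) ^ (p - 1) := by ring

theorem WeakSolution.integral_deriv_smul_powMap (hsol : WeakSolution p ν L T Ω A F u Du)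
    (hp : 1 < p) {η : Spc n → ℝ} {ζ : ℝ → ℝ} (hη : ContDiff ℝ (⊤ : ℕ∞) η)
    (hηc : HasCompactSupport η) (hζ : ContDiff ℝ (⊤ : ℕ∞) ζ) (hζc : HasCompactSupport ζ)
    (hsupp : tsupport η ×ˢ tsupport ζ ⊆ Ω ×ˢ Ioo 0 T) :
    ∫ z in Ω ×ˢ Ioo 0 T, deriv ζ z.2 • η z.1 • powMap (p - 1) (u z) =
      ∫ z in Ω ×ˢ Ioo 0 T, ζ z.2 • matVec (flux p A F u Du z) (gradient η z.1) := by
  have := hsol.isFiniteMeasure_restrict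
  have hW := integrable_comp_smul (hζ.continuous_deriv (by simp)) hζc.deriv measurable_snd
    (integrable_comp_smul hη.continuous hηc measurable_fst
      (integrable_powMap (by linarith : 0 < p - 1) (by linarith) hsol.memLp_u))
  have hA := integrable_comp_smul hζ.continuous hζc measurable_snd
    (integrable_matVec_gradient hη hηc (hsol.integrableOn_vectorField hp))
  have hF := integrable_comp_smul hζ.continuous hζc measurable_snd
    (integrable_matVec_gradient hη hηc
      (integrable_powMap (by linarith : 0 < p - 1) (by linarith) hsol.memLp_F))
  refine ext_inner_left ℝ fun e => ?_
  have hweak := hsol.weakForm (splitTest η ζ e) (contDiff_splitTest hη hζ)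
    (hasCompactSupport_splitTest hηc hζc) (tsupport_splitTest_subset.trans hsupp)
  have hexp : p - 1 - 1 = p - 2 := by ring
  have hleft : ∀ z, ‖u z‖ ^ (p - 2) * inner ℝ (u z) (tderiv (splitTest η ζ e) z) =
      inner ℝ e (deriv ζ z.2 • η z.1 • powMap (p - 1) (u z)) := fun z => by
    rw [← inner_tderiv_splitTest (hζ.differentiable (by simp)), powMap, hexp,
      real_inner_smul_left]
  have hright : ∀ z, ‖F z‖ ^ (p - 2) * inner ℝ e (ζ z.2 • matVec (F z) (gradient η z.1)) =
      inner ℝ e (ζ z.2 • matVec (powMap (p - 1) (F z)) (gradient η z.1)) := fun z => by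
    rw [powMap, hexp, map_smul, smul_apply, smul_comm, real_inner_smul_right _ _ (‖F z‖ ^ _)]
  simp_rw [hleft, gradPair_splitTest (hη.differentiable (by simp)), hright] at hweak
  rw [integral_sub (hW.const_inner e) (hA.const_inner e), sub_eq_iff_eq_add',
    ← integral_add (hA.const_inner e) (hF.const_inner e), integral_inner hW] at hweak
  rw [hweak, ← integral_inner]
  · simp only [flux, map_add, add_apply, smul_add, inner_add_right]
  · exact integrable_comp_smul hζ.continuous hζc measurable_snd
      (integrable_matVec_gradient hη hηc (hsol.integrableOn_flux hp))

theorem WeakSolution.hasWeakLineDeriv_integral_smul_powMap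
    (hsol : WeakSolution p ν L T Ω A F u Du) (hp : 1 < p) {B : Set (Spc n)} {I : Set ℝ}
    (hB : volume B ≠ 0) (hQ : B ×ˢ I ⊆ Ω ×ˢ Ioo 0 T) {η : Spc n → ℝ}
    (hη : ContDiff ℝ (⊤ : ℕ∞) η) (hηc : HasCompactSupport η) (hηB : tsupport η ⊆ B) :
    HasWeakLineDeriv volume I 1 (fun t => ∫ x, η x • powMap (p - 1) (u (x, t)) ∂volume[|B])
      fun t => ∫ x, -matVec (flux p A F u Du (x, t)) (gradient η x) ∂volume[|B] := by
  have := hsol.isFiniteMeasure_restrict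
  have hset : ∀ {f : Spc n × ℝ → Vec N}, (∀ z, z.1 ∉ tsupport η ∨ z.2 ∉ I → f z = 0) →
      ∫ z in Ω ×ˢ Ioo 0 T, f z = ∫ z in B ×ˢ I, f z := fun hf =>
    setIntegral_eq_of_subset_of_forall_sdiff_eq_zero hsol.measurableSet hQ fun z hz =>
      hf z ((not_and_or.1 hz.2).imp_left (mt (@hηB _)))
  refine hasWeakLineDeriv_integral_prod (W := fun z => η z.1 • powMap (p - 1) (u z))
    (k := fun z => -matVec (flux p A F u Du z) (gradient η z.1))
    (integrable_comp_smul hη.continuous hηc measurable_fst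
      (integrable_cond_prod_restrict _ _ _ hB (IntegrableOn.mono_set
        (integrable_powMap (by linarith) (by linarith) hsol.memLp_u) hQ)))
    (integrable_matVec_gradient hη hηc
      (integrable_cond_prod_restrict _ _ _ hB ((hsol.integrableOn_flux hp).mono_set hQ))).neg
    fun ζ hζ hζc hζI => ?_
  have hweak := hsol.integral_deriv_smul_powMap hp hη hηc hζ hζc
    ((prod_mono hηB hζI).trans hQ)
  rw [hset, hset] at hweak
  · simp only [cond_prod_restrict, ← Measure.volume_eq_prod, integral_smul_measure, smul_neg,
      integral_neg, neg_neg, hweak]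
  · rintro z (hz | hz)
    · rw [gradient_eq_zero_of_notMem_tsupport hz, map_zero, smul_zero]
    · rw [image_eq_zero_of_notMem_tsupport fun h => hz (hζI h), zero_smul]
  · rintro z (hz | hz)
    · rw [image_eq_zero_of_notMem_tsupport hz, zero_smul, smul_zero]
    · rw [image_eq_zero_of_notMem_tsupport fun h => hz (hζI (tsupport_deriv_subset h)),
        zero_smul]

theorem WeakSolution.memLp_norm_add_norm (hsol : WeakSolution p ν L T Ω A F u Du) :
    MemLp (fun z => ‖Du z‖ + ‖F z‖) (ENNReal.ofReal p) (volume.restrict (Ω ×ˢ Ioo 0 T)) :=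
  hsol.memLp_Du.norm.add hsol.memLp_F.norm

theorem WeakSolution.integrableOn_norm_add_norm_rpow (hsol : WeakSolution p ν L T Ω A F u Du)
    (hp : 1 < p) : IntegrableOn (fun z => (‖Du z‖ + ‖F z‖) ^ (p - 1)) (Ω ×ˢ Ioo 0 T) := by
  have := hsol.isFiniteMeasure_restrict
  simpa only [IntegrableOn, Real.norm_of_nonneg (add_nonneg (norm_nonneg _) (norm_nonneg _))]
    using integrable_norm_rpow (by linarith : 0 < p - 1) (by linarith) hsol.memLp_norm_add_norm

theorem WeakSolution.ae_norm_matVec_flux_gradient_le (hsol : WeakSolution p ν L T Ω A F u Du)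
    (hp : 1 < p) {η : Spc n → ℝ} {G : ℝ} (hG : ∀ x, ‖gradient η x‖ ≤ G) :
    ∀ᵐ z ∂volume.restrict (Ω ×ˢ Ioo 0 T),
      ‖matVec (flux p A F u Du z) (gradient η z.1)‖ ≤
        (L + 1) * G * (‖Du z‖ + ‖F z‖) ^ (p - 1) := by
  filter_upwards [hsol.ae_norm_flux_le hp] with z hz
  calc _ ≤ ‖flux p A F u Du z‖ * ‖gradient η z.1‖ :=
        (matVec _).le_of_opNorm_le (norm_matVec_le _) _
    _ ≤ (L + 1) * (‖Du z‖ + ‖F z‖) ^ (p - 1) * G := by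
        gcongr
        exacts [(norm_nonneg _).trans hz, hG _]
    _ = _ := by ring

theorem WeakSolution.integral_norm_integral_flux_le (hsol : WeakSolution p ν L T Ω A F u Du)
    (hp : 1 < p) {B : Set (Spc n)} {I : Set ℝ} (hB₀ : volume B ≠ 0) (hB : volume B ≠ ∞)
    (hI₀ : volume I ≠ 0) (hI : volume I ≠ ∞) (hQ : B ×ˢ I ⊆ Ω ×ˢ Ioo 0 T) {η : Spc n → ℝ}
    (hη : ContDiff ℝ (⊤ : ℕ∞) η) (hηc : HasCompactSupport η) {G : ℝ}
    (hG : ∀ x, ‖gradient η x‖ ≤ G) :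
    ∫ t in I, ‖∫ x, -matVec (flux p A F u Du (x, t)) (gradient η x) ∂volume[|B]‖ ≤
      volume.real I * ((L + 1) * G *
        ∫ z, (‖Du z‖ + ‖F z‖) ^ (p - 1) ∂(volume : Measure (Spc n × ℝ))[|B ×ˢ I]) := by
  have := hsol.isFiniteMeasure_restrict
  have hk := (integrable_matVec_gradient hη hηc (integrable_cond_prod_restrict _ _ _ hB₀
    ((hsol.integrableOn_flux hp).mono_set hQ))).neg
  have hg := integrable_cond_prod_restrict _ _ _ hB₀
    ((hsol.integrableOn_norm_add_norm_rpow hp).mono_set hQ)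
  have hflux : ∀ᵐ z ∂(volume[|B]).prod (volume.restrict I),
      ‖-matVec (flux p A F u Du z) (gradient η z.1)‖ ≤
        (L + 1) * G * (‖Du z‖ + ‖F z‖) ^ (p - 1) := by
    rw [cond_prod_restrict, ← Measure.volume_eq_prod]
    simpa only [norm_neg] using Measure.ae_smul_measure (ae_restrict_of_ae_restrict_of_subset hQ
      (hsol.ae_norm_matVec_flux_gradient_le hp hG)) _
  calc _ ≤ ∫ t in I, ∫ x, ‖-matVec (flux p A F u Du (x, t)) (gradient η x)‖ ∂volume[|B] :=
        integral_mono hk.integral_prod_right.norm hk.norm.integral_prod_right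
          fun t => norm_integral_le_integral_norm _
    _ = ∫ z, ‖-matVec (flux p A F u Du z) (gradient η z.1)‖
          ∂(volume[|B]).prod (volume.restrict I) := (integral_prod_symm _ hk.norm).symm
    _ ≤ ∫ z, (L + 1) * G * (‖Du z‖ + ‖F z‖) ^ (p - 1)
          ∂(volume[|B]).prod (volume.restrict I) :=
        integral_mono_ae hk.norm (hg.const_mul _) hflux
    _ = _ := by
        rw [integral_cond_prod_restrict _ _ _ _ hB₀ hB hI₀ hI, integral_const_mul, smul_eq_mul,
          Measure.volume_eq_prod]

/-- The slice mean `t ↦ powMean u(·, t)` over `B` with weight `η`, for the exponent `s = p - 1` of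
the system. -/
def sliceMean (p : ℝ) (B : Set (Spc n)) (η : Spc n → ℝ) (u : Spc n × ℝ → Vec N) (t : ℝ) : Vec N :=
  powMean (p - 1) volume[|B] η fun x => u (x, t)

theorem WeakSolution.integrableOn_integral_smul_powMap (hsol : WeakSolution p ν L T Ω A F u Du)
    (hp : 1 < p) {B : Set (Spc n)} {I : Set ℝ} (hB₀ : volume B ≠ 0) (hQ : B ×ˢ I ⊆ Ω ×ˢ Ioo 0 T)
    {η : Spc n → ℝ} (hη : Continuous η) (hηc : HasCompactSupport η) :
    IntegrableOn (fun t => ∫ x, η x • powMap (p - 1) (u (x, t)) ∂volume[|B]) I :=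
  have := hsol.isFiniteMeasure_restrict
  (integrable_comp_smul hη hηc measurable_fst (integrable_cond_prod_restrict _ _ _ hB₀
    (IntegrableOn.mono_set (integrable_powMap (by linarith : 0 < p - 1) (by linarith) hsol.memLp_u)
      hQ))).integral_prod_right

theorem WeakSolution.aestronglyMeasurable_sliceMean (hsol : WeakSolution p ν L T Ω A F u Du)
    (hp : 1 < p) {B : Set (Spc n)} {I : Set ℝ} (hB₀ : volume B ≠ 0) (hQ : B ×ˢ I ⊆ Ω ×ˢ Ioo 0 T)
    {η : Spc n → ℝ} (hη : Continuous η) (hηc : HasCompactSupport η) :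
    AEStronglyMeasurable (fun z : Spc n × ℝ => sliceMean p B η u z.2) volume[|B ×ˢ I] :=
  (aestronglyMeasurable_powMap (hsol.integrableOn_integral_smul_powMap hp hB₀ hQ hη hηc).1
    _).comp_quasiMeasurePreserving (quasiMeasurePreserving_snd_cond _ _ I B)

theorem WeakSolution.ae_ae_sliceMean_le (hsol : WeakSolution p ν L T Ω A F u Du)
    (hp : 2 ≤ p) {B : Set (Spc n)} {I : Set ℝ} (hB₀ : volume B ≠ 0) (hB : volume B ≠ ∞)
    (hI₀ : volume I ≠ 0) (hI : volume I ≠ ∞) (hIo : IsOpen I) (hIc : Convex ℝ I)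
    (hQ : B ×ˢ I ⊆ Ω ×ˢ Ioo 0 T) {η : Spc n → ℝ}
    (hη : ContDiff ℝ (⊤ : ℕ∞) η) (hηc : HasCompactSupport η) (hηB : tsupport η ⊆ B) {G : ℝ}
    (hG : ∀ x, ‖gradient η x‖ ≤ G) :
    ∀ᵐ z' ∂(volume : Measure (Spc n × ℝ))[|B ×ˢ I], ∀ᵐ z ∂volume[|B ×ˢ I],
      ‖sliceMean p B η u z.2 - sliceMean p B η u z'.2‖ ^ (p - 1) +
          ‖sliceMean p B η u z'.2‖ ^ (p - 1 - 1) *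
            ‖sliceMean p B η u z.2 - sliceMean p B η u z'.2‖ ≤
      (2 ^ (p - 1) + 2) * (volume.real I * ((L + 1) * G *
        ∫ z, (‖Du z‖ + ‖F z‖) ^ (p - 1) ∂(volume : Measure (Spc n × ℝ))[|B ×ˢ I])) := by
  have hweak := hsol.hasWeakLineDeriv_integral_smul_powMap (by linarith) hB₀ hQ hη hηc hηB
  have hu := hsol.integrableOn_integral_smul_powMap (by linarith) hB₀ hQ hη.continuous hηc
  have hflux := (integrable_matVec_gradient hη hηc (integrable_cond_prod_restrict _ _ _ hB₀
    ((hsol.integrableOn_flux (by linarith)).mono_set hQ))).neg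
  have hsnd := quasiMeasurePreserving_snd_cond (volume : Measure (Spc n)) (volume : Measure ℝ) I B
  have hosc := hweak.ae_ae_powMean_le (by linarith) hIo hIc
    hu hflux.integral_prod_right
  filter_upwards [hsnd.ae hosc] with z' hz'
  filter_upwards [hsnd.ae hz'] with z hz
  refine hz.trans ?_
  gcongr
  exact hsol.integral_norm_integral_flux_le (by linarith) hB₀ hB hI₀ hI hQ hη hηc hG

theorem WeakSolution.ae_memLp_slice (hsol : WeakSolution p ν L T Ω A F u Du) {B : Set (Spc n)}
    {I : Set ℝ} (hB₀ : volume B ≠ 0) (hB : volume B ≠ ∞) (hI₀ : volume I ≠ 0) (hI : volume I ≠ ∞)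
    (hQ : B ×ˢ I ⊆ Ω ×ˢ Ioo 0 T) {r : ℝ} (hr : 0 < r) (hrp : r ≤ p) :
    ∀ᵐ z ∂(volume : Measure (Spc n × ℝ))[|B ×ˢ I],
      MemLp (fun x => u (x, z.2)) (ENNReal.ofReal r) volume[|B] := by
  have := ProbabilityTheory.cond_isProbabilityMeasure_of_finite hB₀ hB
  have := ProbabilityTheory.cond_isProbabilityMeasure_of_finite hI₀ hI
  have hQ₀ : volume (B ×ˢ I) ≠ 0 := by
    rw [Measure.volume_eq_prod, Measure.prod_prod]
    exact mul_ne_zero hB₀ hI₀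
  have hu := memLp_cond_of_subset hsol.memLp_u hQ hQ₀
  rw [Measure.volume_eq_prod, ← cond_prod_cond _ _ I hB₀ hB] at hu ⊢
  exact Measure.quasiMeasurePreserving_snd.ae
    (_root_.ae_memLp_slice hsol.measu.stronglyMeasurable hr (memLp_ofReal_of_le hrp hu))

/-- The constant of the slicewise Poincaré inequality for a weight bounded by `M`. -/
def sliceConst (n : ℕ) (p M : ℝ) : ℝ := powMeanConst (p - 1) M * 2 ^ (n + 1)

theorem one_le_sliceConst (n : ℕ) {M : ℝ} (hp : 2 ≤ p) (hM : 1 ≤ M) : 1 ≤ sliceConst n p M :=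
  one_le_mul_of_one_le_of_one_le (one_le_powMeanConst (by linarith) hM)
    (one_le_pow₀ one_le_two)

theorem WeakSolution.eLpNorm_sub_sliceMean_le (hsol : WeakSolution p ν L T Ω A F u Du)
    (hp : 2 ≤ p) {x₀ : Spc n} {R : ℝ} {I : Set ℝ} (hR : 0 < R) (hIo : IsOpen I)
    (hIc : Convex ℝ I) (hI₀ : volume I ≠ 0) (hI : volume I ≠ ∞)
    (hQ : Metric.ball x₀ R ×ˢ I ⊆ Ω ×ˢ Ioo 0 T) {η : Spc n → ℝ} {M : ℝ} (hη : Continuous η)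
    (hη₀ : ∀ x, 0 ≤ η x) (hηM : ∀ x, η x ≤ M) (hM : 1 ≤ M)
    (hη₁ : ∫ x, η x ∂volume[|Metric.ball x₀ R] = 1) {r : ℝ} (hr : p - 1 ≤ r) (hrp : r ≤ p) :
    eLpNorm (fun z => u z - sliceMean p (Metric.ball x₀ R) η u z.2) (ENNReal.ofReal r)
        volume[|Metric.ball x₀ R ×ˢ I] ≤
      ENNReal.ofReal (sliceConst n p M * R) *
        eLpNorm (fun z => ‖Du z‖ + ‖F z‖) (ENNReal.ofReal r) volume[|Metric.ball x₀ R ×ˢ I] := by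
  have hB₀ : volume (Metric.ball x₀ R) ≠ 0 := (Metric.measure_ball_pos _ _ hR).ne'
  have hB : volume (Metric.ball x₀ R) ≠ ∞ := measure_ball_lt_top.ne
  have := ProbabilityTheory.cond_isProbabilityMeasure_of_finite hB₀ hB
  have hC := zero_le_one.trans (one_le_powMeanConst (by linarith : 1 ≤ p - 1) hM)
  have hslice : ∀ᵐ z ∂(volume : Measure (Spc n × ℝ))[|Metric.ball x₀ R ×ˢ I],
      ‖sliceMean p (Metric.ball x₀ R) η u z.2 - u z‖ₑ ≤
        ENNReal.ofReal (powMeanConst (p - 1) M) *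
          eLpNorm (fun x => u (x, z.2) - u z) (ENNReal.ofReal r) volume[|Metric.ball x₀ R] := by
    filter_upwards [hsol.ae_memLp_slice hB₀ hB hI₀ hI hQ (by linarith) hrp] with z hz
    have hsub := hz.sub (memLp_const (u z))
    rw [← ofReal_norm, ← Pi.sub_def, ← ofReal_lpNorm hsub, ← ENNReal.ofReal_mul hC]
    exact ENNReal.ofReal_le_ofReal (norm_powMean_sub_le hη.aestronglyMeasurable hη₀ hηM hM hη₁
      (by linarith) hr hz _)
  have hu := (hsol.integrableOn_of_memLp (by linarith) hsol.memLp_u).mono_set hQ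
  have hDu : IntegrableOn (fun z => matVec (Du z)) (Metric.ball x₀ R ×ˢ I) :=
    matVec.integrable_comp ((hsol.integrableOn_of_memLp (by linarith) hsol.memLp_Du).mono_set hQ)
  refine (eLpNorm_sub_comp_snd_le hR hIo hIc hsol.measu.stronglyMeasurable hu hDu
    (fun h => (hsol.hasWeakLineDeriv (by linarith) h).mono hQ) (by linarith)
    ENNReal.ofReal_ne_top hslice).trans ?_
  have hDu_le : ∀ z, ‖matVec (Du z)‖ ≤ ‖Du z‖ + ‖F z‖ := fun z =>
    (norm_matVec_le _).trans (le_add_of_nonneg_right (norm_nonneg _))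
  rw [finrank_euclideanSpace_fin, show (2 : ℝ≥0∞) ^ n = ENNReal.ofReal (2 ^ n) by simp,
    show sliceConst n p M * R = powMeanConst (p - 1) M * (2 ^ n * (2 * R)) by
      rw [sliceConst, pow_succ]; ring,
    ENNReal.ofReal_mul hC, ENNReal.ofReal_mul (by positivity : (0 : ℝ) ≤ 2 ^ n), mul_assoc,
    mul_assoc]
  gcongr
  exact eLpNorm_mono_real hDu_le

/-- The slice means on `Q_ρ^{(μ)}(z₀)`, weighted with the normalized cutoff on its spatial ball. -/
def cylMean (p μ ρ : ℝ) (z₀ : Spc n × ℝ) (u : Spc n × ℝ → Vec N) : ℝ → Vec N :=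
  sliceMean p (Metric.ball z₀.1 (parRadius p μ ρ)) (cutoff z₀.1 (parRadius p μ ρ)) u

/-- The constant of the oscillation estimate in time for a cutoff whose gradient is bounded by
`G`. -/
def oscConst (p L G : ℝ) : ℝ := (2 ^ (p - 1) + 2) * (2 * ((L + 1) * G))

theorem one_le_oscConst {G : ℝ} (hL : 0 ≤ L) (hG : 1 ≤ G) : 1 ≤ oscConst p L G := by
  have hpow : (0 : ℝ) < 2 ^ (p - 1) := by positivity
  exact one_le_mul_of_one_le_of_one_le (by linarith) (one_le_mul_of_one_le_of_one_le one_le_two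
    (one_le_mul_of_one_le_of_one_le (by linarith) hG))

section ParabolicCylinder

variable {ρ μ : ℝ} {z₀ : Spc n × ℝ} {r : ℝ}

theorem WeakSolution.memLp_and_lpNorm_sub_cylMean_le (hsol : WeakSolution p ν L T Ω A F u Du)
    (hp : 2 ≤ p) (hμ : 0 < μ) (hρ : 0 < ρ) (hQ : parCyl p μ ρ z₀ ⊆ Ω ×ˢ Ioo 0 T) {M : ℝ}
    (hM : 1 ≤ M) (hηM : ∀ x, cutoff z₀.1 (parRadius p μ ρ) x ≤ M) (hr : p - 1 ≤ r) (hrp : r ≤ p) :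
    MemLp (fun z => u z - cylMean p μ ρ z₀ u z.2) (ENNReal.ofReal r)
        volume[|parCyl p μ ρ z₀] ∧
      lpNorm (fun z => u z - cylMean p μ ρ z₀ u z.2) (ENNReal.ofReal r)
          volume[|parCyl p μ ρ z₀] ≤
        sliceConst n p M * (parRadius p μ ρ *
          lpNorm (fun z => ‖Du z‖ + ‖F z‖) (ENNReal.ofReal r) volume[|parCyl p μ ρ z₀]) := by
  have := isProbabilityMeasure_cond_parCyl hp hμ hρ z₀
  have hQ₀ := volume_parCyl_ne_zero hp hμ hρ z₀
  have hu := memLp_cond_of_subset hsol.memLp_u hQ hQ₀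
  have hg := memLp_ofReal_of_le hrp (memLp_cond_of_subset hsol.memLp_norm_add_norm hQ hQ₀)
  have hR := parRadius_pos (p := p) hμ hρ
  have hC := zero_le_one.trans (one_le_sliceConst n hp hM)
  rw [← mul_assoc]
  rw [parCyl_eq_prod hp] at *
  exact memLp_and_lpNorm_le_of_eLpNorm_le (by positivity)
    (hu.1.sub (hsol.aestronglyMeasurable_sliceMean (by linarith)
      (volume_ball_parRadius_ne_zero hμ hρ _) hQ (contDiff_cutoff _ _).continuous
      (hasCompactSupport_cutoff hR))) hg
    (hsol.eLpNorm_sub_sliceMean_le hp hR isOpen_Ioo (convex_Ioo _ _)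
      (volume_Ioo_sub_add_ne_zero hρ _) measure_Ioo_lt_top.ne hQ (contDiff_cutoff _ _).continuous
      (cutoff_nonneg _ _) hηM hM (integral_cutoff hR) hr hrp)

theorem WeakSolution.ae_ae_cylMean_le (hsol : WeakSolution p ν L T Ω A F u Du)
    (hp : 2 ≤ p) (hμ : 0 < μ) (hρ : 0 < ρ) (hQ : parCyl p μ ρ z₀ ⊆ Ω ×ˢ Ioo 0 T) {G : ℝ}
    (hG₀ : 0 ≤ G) (hG : ∀ x, ‖gradient (cutoff z₀.1 (parRadius p μ ρ)) x‖ ≤ G / parRadius p μ ρ)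
    (hr : p - 1 ≤ r) (hrp : r ≤ p) :
    ∀ᵐ z' ∂(volume : Measure (Spc n × ℝ))[|parCyl p μ ρ z₀], ∀ᵐ z ∂volume[|parCyl p μ ρ z₀],
      ‖cylMean p μ ρ z₀ u z.2 - cylMean p μ ρ z₀ u z'.2‖ ^ (p - 1) +
          ‖cylMean p μ ρ z₀ u z'.2‖ ^ (p - 1 - 1) *
            ‖cylMean p μ ρ z₀ u z.2 - cylMean p μ ρ z₀ u z'.2‖ ≤
        oscConst p L G * (μ ^ (p - 1 - 1) * (parRadius p μ ρ *
          lpNorm (fun z => ‖Du z‖ + ‖F z‖) (ENNReal.ofReal r)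
            volume[|parCyl p μ ρ z₀]) ^ (p - 1)) := by
  have := isProbabilityMeasure_cond_parCyl hp hμ hρ z₀
  have hR := parRadius_pos (p := p) hμ hρ
  have hg := memLp_ofReal_of_le hrp (memLp_cond_of_subset hsol.memLp_norm_add_norm hQ
    (volume_parCyl_ne_zero hp hμ hρ z₀))
  have hint := integral_norm_rpow_le_lpNorm_rpow (by linarith : 0 < p - 1) hr hg
  simp only [Real.norm_of_nonneg (add_nonneg (norm_nonneg (Du _)) (norm_nonneg (F _)))] at hint
  have hosc := hsol.ae_ae_sliceMean_le hp (volume_ball_parRadius_ne_zero hμ hρ _)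
    measure_ball_lt_top.ne (volume_Ioo_sub_add_ne_zero hρ _) measure_Ioo_lt_top.ne isOpen_Ioo
    (convex_Ioo _ _) (parCyl_eq_prod hp μ ρ z₀ ▸ hQ) (contDiff_cutoff _ _)
    (hasCompactSupport_cutoff hR) (tsupport_cutoff_subset hR) hG
  rw [← parCyl_eq_prod hp] at hosc
  filter_upwards [hosc] with z' hz'
  filter_upwards [hz'] with z hz
  refine hz.trans ?_
  have hI : volume.real (Ioo (z₀.2 - ρ ^ p) (z₀.2 + ρ ^ p)) = 2 * ρ ^ p := by
    rw [Real.volume_real_Ioo_of_le (by have := Real.rpow_pos_of_pos hρ p; linarith)]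
    ring
  have hL := hsol.hν.le.trans hsol.hνL
  rw [hI, oscConst, Real.mul_rpow hR.le lpNorm_nonneg]
  calc _ ≤ (2 ^ (p - 1) + 2) * (2 * ρ ^ p * ((L + 1) * (G / parRadius p μ ρ) *
        lpNorm (fun z => ‖Du z‖ + ‖F z‖) (ENNReal.ofReal r)
            volume[|parCyl p μ ρ z₀] ^ (p - 1))) := by gcongr
    _ = (2 ^ (p - 1) + 2) * (2 * ((L + 1) * G)) * ((ρ ^ p / parRadius p μ ρ) *
        lpNorm (fun z => ‖Du z‖ + ‖F z‖) (ENNReal.ofReal r)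
            volume[|parCyl p μ ρ z₀] ^ (p - 1)) := by ring
    _ = _ := by
        rw [rpow_div_parRadius (by linarith) hμ hρ]
        ring

theorem WeakSolution.exists_ae_norm_cylMean_sub_le (hsol : WeakSolution p ν L T Ω A F u Du)
    (hp : 2 ≤ p) (hμ : 0 < μ) (hρ : 0 < ρ) (hQ : parCyl p μ ρ z₀ ⊆ Ω ×ˢ Ioo 0 T) {M G : ℝ}
    (hM : 1 ≤ M) (hηM : ∀ x, cutoff z₀.1 (parRadius p μ ρ) x ≤ M) (hG : 1 ≤ G)
    (hηG : ∀ x, ‖gradient (cutoff z₀.1 (parRadius p μ ρ)) x‖ ≤ G / parRadius p μ ρ) {K : ℝ}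
    (hsup : SuperIntrinsic p K μ ρ z₀ u Du F) (hr : p - 1 ≤ r) (hrp : r ≤ p) :
    ∃ b, ∀ᵐ z ∂(volume : Measure (Spc n × ℝ))[|parCyl p μ ρ z₀],
      ‖cylMean p μ ρ z₀ u z.2 - b‖ ≤
        oscConst p L G * (4 * sliceConst n p M * (2 * max K 1)) ^ (p - 1 - 1) *
          (parRadius p μ ρ * lpNorm (fun z => ‖Du z‖ + ‖F z‖) (ENNReal.ofReal r)
            volume[|parCyl p μ ρ z₀]) := by
  have := isProbabilityMeasure_cond_parCyl hp hμ hρ z₀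
  have hQ₀ := volume_parCyl_ne_zero hp hμ hρ z₀
  have hR := (parRadius_pos (p := p) hμ hρ).le
  have hu := memLp_cond_of_subset hsol.memLp_u hQ hQ₀
  have hDu := memLp_cond_of_subset hsol.memLp_Du hQ hQ₀
  have hF := memLp_cond_of_subset hsol.memLp_F hQ hQ₀
  obtain ⟨hua, hua_le⟩ :=
    hsol.memLp_and_lpNorm_sub_cylMean_le hp hμ hρ hQ hM hηM (by linarith) le_rfl
  have ha : MemLp (fun z => cylMean p μ ρ z₀ u z.2) (ENNReal.ofReal p)
      volume[|parCyl p μ ρ z₀] := by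
    simpa only [Pi.sub_def, sub_sub_cancel] using hu.sub hua
  exact exists_ae_norm_sub_le_of_intrinsic (ENNReal.one_le_ofReal.2 (by linarith)) (by linarith)
    (one_le_oscConst (hsol.hν.le.trans hsol.hνL) hG) (one_le_sliceConst n hp hM)
    (by linarith [le_max_right K 1]) hμ (mul_nonneg hR lpNorm_nonneg)
    (mul_le_mul_of_nonneg_left (lpNorm_ofReal_le_of_le hrp (hDu.norm.add hF.norm)) hR) ha hua_le
    (hsup.mul_lpNorm_le hp hμ hρ hu hDu hF)
    (hsol.ae_ae_cylMean_le hp hμ hρ hQ (by linarith) hηG hr hrp)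

/-- The constant of the Poincaré inequality between the `L^q` norms of `u` and `|Du| + |F|`, for a
cutoff bounded by `M` with gradient bounded by `G`. -/
def poincareConst (n : ℕ) (p L K M G : ℝ) : ℝ :=
  sliceConst n p M + oscConst p L G * (4 * sliceConst n p M * (2 * max K 1)) ^ (p - 1 - 1)

theorem one_le_poincareConst (n : ℕ) {K M G : ℝ} (hp : 2 ≤ p) (hL : 0 ≤ L) (hM : 1 ≤ M)
    (hG : 1 ≤ G) : 1 ≤ poincareConst n p L K M G := by
  have hS := one_le_sliceConst n hp hM
  have hO := one_le_oscConst (p := p) hL hG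
  exact le_add_of_le_of_nonneg hS (by positivity)

theorem WeakSolution.lpNorm_sub_integral_le (hsol : WeakSolution p ν L T Ω A F u Du)
    (hp : 2 ≤ p) (hμ : 0 < μ) (hρ : 0 < ρ) (hQ : parCyl p μ ρ z₀ ⊆ Ω ×ˢ Ioo 0 T) {M G : ℝ}
    (hM : 1 ≤ M) (hηM : ∀ x, cutoff z₀.1 (parRadius p μ ρ) x ≤ M) (hG : 1 ≤ G)
    (hηG : ∀ x, ‖gradient (cutoff z₀.1 (parRadius p μ ρ)) x‖ ≤ G / parRadius p μ ρ) {K : ℝ}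
    (hsup : SuperIntrinsic p K μ ρ z₀ u Du F) (hr : p - 1 ≤ r) (hrp : r ≤ p) :
    lpNorm (fun z => u z - ∫ w, u w ∂volume[|parCyl p μ ρ z₀]) (ENNReal.ofReal r)
        volume[|parCyl p μ ρ z₀] ≤
      2 * (poincareConst n p L K M G * (parRadius p μ ρ *
        lpNorm (fun z => ‖Du z‖ + ‖F z‖) (ENNReal.ofReal r) volume[|parCyl p μ ρ z₀])) := by
  have := isProbabilityMeasure_cond_parCyl hp hμ hρ z₀
  have hu := memLp_ofReal_of_le hrp
    (memLp_cond_of_subset hsol.memLp_u hQ (volume_parCyl_ne_zero hp hμ hρ z₀))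
  obtain ⟨hua, hua_le⟩ := hsol.memLp_and_lpNorm_sub_cylMean_le hp hμ hρ hQ hM hηM hr hrp
  obtain ⟨b, hb⟩ :=
    hsol.exists_ae_norm_cylMean_sub_le hp hμ hρ hQ hM hηM hG hηG hsup hr hrp
  have hC := one_le_oscConst (p := p) (hsol.hν.le.trans hsol.hνL) hG
  have hS := one_le_sliceConst n hp hM
  have hX := mul_nonneg (parRadius_pos (p := p) hμ hρ).le (lpNorm_nonneg
    (f := fun z => ‖Du z‖ + ‖F z‖) (p := ENNReal.ofReal r) (μ := volume[|parCyl p μ ρ z₀]))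
  have hab := lpNorm_le_of_ae_norm_le (by positivity) hb (ENNReal.ofReal r)
  have hadd := lpNorm_add_le (g := fun z => cylMean p μ ρ z₀ u z.2 - b) hua
    (ENNReal.one_le_ofReal.2 (by linarith))
  simp only [Pi.add_def, sub_add_sub_cancel] at hadd
  refine (_root_.lpNorm_sub_integral_le (by linarith) hu b).trans ?_
  rw [poincareConst, add_mul]
  gcongr
  exact hadd.trans (add_le_add hua_le hab)

theorem WeakSolution.setAverage_norm_sub_rpow_le (hsol : WeakSolution p ν L T Ω A F u Du)
    (hp : 2 ≤ p) (hμ : 0 < μ) (hρ : 0 < ρ) (hQ : parCyl p μ ρ z₀ ⊆ Ω ×ˢ Ioo 0 T) {M G : ℝ}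
    (hM : 1 ≤ M) (hηM : ∀ x, cutoff z₀.1 (parRadius p μ ρ) x ≤ M) (hG : 1 ≤ G)
    (hηG : ∀ x, ‖gradient (cutoff z₀.1 (parRadius p μ ρ)) x‖ ≤ G / parRadius p μ ρ) {K : ℝ}
    (hsup : SuperIntrinsic p K μ ρ z₀ u Du F) (hr : p - 1 ≤ r) (hrp : r ≤ p) :
    ⨍ z in parCyl p μ ρ z₀,
        ‖u z - ⨍ w in parCyl p μ ρ z₀, u w‖ ^ r / (μ ^ (r * (2 - p) / p) * ρ ^ r) ≤
      (4 * poincareConst n p L K M G) ^ p *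
        ⨍ z in parCyl p μ ρ z₀, (‖Du z‖ ^ r + ‖F z‖ ^ r) := by
  have := isProbabilityMeasure_cond_parCyl hp hμ hρ z₀
  have hQ₀ := volume_parCyl_ne_zero hp hμ hρ z₀
  have hu := memLp_ofReal_of_le hrp (memLp_cond_of_subset hsol.memLp_u hQ hQ₀)
  have hR := parRadius_pos (p := p) hμ hρ
  have hC := one_le_poincareConst n (K := K) hp (hsol.hν.le.trans hsol.hνL) hM hG
  have hle := hsol.lpNorm_sub_integral_le hp hμ hρ hQ hM hηM hG hηG hsup hr hrp
  rw [← mul_assoc, ← mul_assoc] at hle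
  have hint := integral_norm_rpow_le_of_lpNorm_le (by linarith) (by positivity)
    (hu.1.sub aestronglyMeasurable_const)
    (memLp_ofReal_of_le hrp (memLp_cond_of_subset hsol.memLp_Du hQ hQ₀))
    (memLp_ofReal_of_le hrp (memLp_cond_of_subset hsol.memLp_F hQ hQ₀)) hle
  simp only [setAverage_eq', ← ProbabilityTheory.cond.eq_1]
  rw [integral_div, ← parRadius_rpow hμ.le hρ.le, div_le_iff₀ (by positivity)]
  have : 0 ≤ ∫ z, (‖Du z‖ ^ r + ‖F z‖ ^ r) ∂volume[|parCyl p μ ρ z₀] :=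
    integral_nonneg fun z => by positivity
  refine hint.trans ?_
  rw [show 2 * poincareConst n p L K M G * parRadius p μ ρ * 2 =
      4 * poincareConst n p L K M G * parRadius p μ ρ by ring,
    Real.mul_rpow (by positivity) hR.le, mul_right_comm]
  gcongr
  linarith

end ParabolicCylinder

end WeakSolution

theorem parabolic_poincare_superquadratic_general (n : ℕ) (p L K : ℝ) (hp : 2 ≤ p) :
    ∃ c > 0, ∀ (N : ℕ) (ν T : ℝ) (Ω : Set (Spc n))
      (A : Spc n × ℝ → Vec N → Mat N n → Mat N n) (F : Spc n × ℝ → Mat N n)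
      (u : Spc n × ℝ → Vec N) (Du : Spc n × ℝ → Mat N n),
      WeakSolution p ν L T Ω A F u Du →
      ∀ (z₀ : Spc n × ℝ) (ρ μ : ℝ), 0 < ρ → 0 < μ →
        parCyl p μ ρ z₀ ⊆ Ω ×ˢ Ioo 0 T →
        SuperIntrinsic p K μ ρ z₀ u Du F →
        ∀ q ∈ Icc (p - 1) p,
          ⨍ z in parCyl p μ ρ z₀,
              ‖u z - ⨍ w in parCyl p μ ρ z₀, u w‖ ^ q / (μ ^ (q * (2 - p) / p) * ρ ^ q)
            ≤ c * ⨍ z in parCyl p μ ρ z₀, (‖Du z‖ ^ q + ‖F z‖ ^ q) := by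
  obtain ⟨M, hM, hηM⟩ := exists_cutoff_le n
  obtain ⟨G, hG, hηG⟩ := exists_norm_gradient_cutoff_le n
  have hC := one_le_poincareConst n (K := K) hp (abs_nonneg L) hM hG
  refine ⟨(4 * poincareConst n p |L| K M G) ^ p, by positivity, ?_⟩
  intro N ν T Ω A F u Du hsol z₀ ρ μ hρ hμ hQ hsup q hq
  rw [abs_of_pos (hsol.hν.trans_le hsol.hνL)]
  exact hsol.setAverage_norm_sub_rpow_le hp hμ hρ hQ hM (hηM _ _) hG
    (hηG _ _ (parRadius_pos hμ hρ)) hsup hq.1 hq.2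

/-- Parabolic Poincaré inequality, superquadratic case: let `p ≥ 2` and `u` a weak solution.
On any cylinder `Q_ρ^{(μ)}(z₀) ⊆ Ω_T` which is both `μ`-sub-intrinsic and `μ`-super-intrinsic
with constant `K`, for any `q ∈ [p−1, p]`:
`⨍⨍ |u − (u)|^q/(μ^{q(2−p)/p}ρ^q) ≤ c ⨍⨍ (|Du|^q + |F|^q)` with `c = c(n, p, L, K)`. -/
theorem parabolic_poincare_superquadratic (n : ℕ) (p L K : ℝ) (hp : 2 ≤ p) (hK : 1 ≤ K) :
    ∃ c > 0, ∀ (N : ℕ) (ν T : ℝ) (Ω : Set (Spc n))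
      (A : Spc n × ℝ → Vec N → Mat N n → Mat N n) (F : Spc n × ℝ → Mat N n)
      (u : Spc n × ℝ → Vec N) (Du : Spc n × ℝ → Mat N n),
      WeakSolution p ν L T Ω A F u Du →
      ∀ (z₀ : Spc n × ℝ) (ρ μ : ℝ), 0 < ρ → 0 < μ →
        parCyl p μ ρ z₀ ⊆ Ω ×ˢ Ioo 0 T →
        SubIntrinsic p K μ ρ z₀ u Du F →
        SuperIntrinsic p K μ ρ z₀ u Du F →
        ∀ q ∈ Icc (p - 1) p,
          ⨍ z in parCyl p μ ρ z₀,
              ‖u z - ⨍ w in parCyl p μ ρ z₀, u w‖ ^ q / (μ ^ (q * (2 - p) / p) * ρ ^ q)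
            ≤ c * ⨍ z in parCyl p μ ρ z₀, (‖Du z‖ ^ q + ‖F z‖ ^ q) := by
  obtain ⟨c, hc, h⟩ := parabolic_poincare_superquadratic_general n p L K hp
  exact ⟨c, hc, fun N ν T Ω A F u Du hsol z₀ ρ μ hρ hμ hQ _ =>
    h N ν T Ω A F u Du hsol z₀ ρ μ hρ hμ hQ⟩
end
end
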